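/- arXiv:2107.07236 — 2 statements merged into one kernel-verified Lean document; each statement's English description precedes it below -/
import Mathlib

section
/- Let l > 0, n ∈ ℕ with n ≥ 1, and let u be the vortex map on B_l. Let (u_k) be Lipschitz maps from B_l into the closed unit disc of ℝ² with sup_k ∫_{B_l} |∇u_k| dx < ∞. Let (λ_k) ⊂ (0, 2) be strictly decreasing with λ_k → 0, such that ℋ¹({x ∈ B_l \ {0} : |u_k(x) − u(x)| = λ_k}) < ∞ for every k and λ_k · ℋ¹({x ∈ B_l \ {0} : |u_k(x) − u(x)| = λ_k}) → 0. Set D_k := {x ∈ B_l \ {0} : |u_k(x) − u(x)| > λ_k}. Assume there is a measurable ζ : B_l → [0, 1] with ∫_{B_l} ζ dx ≤ 1/n such that ∫_{D_k} g dx → ∫_{B_l} ζ g dx for every g ∈ L¹(B_l). Then for every ε ∈ (0, l): liminf_{k→∞} ∫_{B_l \ D_k} √(1 + |∇u_k(x)|² + (det ∇u_k(x))²) dx ≥ ∫_{B_l \ closure(B_ε)} √(1 + |∇u(x)|²) dx − 1/n − 2/(εn). -/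
open MeasureTheory Filter Metric Topology
open scoped ENNReal NNReal

noncomputable section

abbrev V2 : Type := EuclideanSpace ℝ (Fin 2)

/-- Squared Frobenius norm of (the matrix of) a continuous linear map on `ℝ²`. -/
def frobSq (L : V2 →L[ℝ] V2) : ℝ :=
  ∑ i : Fin 2, ∑ j : Fin 2, (L (EuclideanSpace.single j 1) i) ^ 2

/-- Determinant of (the matrix of) a continuous linear map on `ℝ²`. -/
def detJ (L : V2 →L[ℝ] V2) : ℝ :=
  L (EuclideanSpace.single 0 1) 0 * L (EuclideanSpace.single 1 1) 1 -
    L (EuclideanSpace.single 1 1) 0 * L (EuclideanSpace.single 0 1) 1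

/-- The vortex map `x ↦ x / |x|` (equal to `0` at the origin). -/
def vortex (x : V2) : V2 := ‖x‖⁻¹ • x

/-- The area integrand `√(1 + |∇v|² + (det ∇v)²)`. -/
def areaIntegrand (v : V2 → V2) (x : V2) : ℝ :=
  Real.sqrt (1 + frobSq (fderiv ℝ v x) + detJ (fderiv ℝ v x) ^ 2)

/-- Area of the graph of `v` over the set `E`. -/
def graphArea (v : V2 → V2) (E : Set V2) : ℝ≥0∞ :=
  ∫⁻ x in E, ENNReal.ofReal (areaIntegrand v x)

/-- `∫_{B_l} √(1 + |∇u|²) dx` for the vortex map `u`. -/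
def vortexGradArea (l : ℝ) : ℝ≥0∞ :=
  ∫⁻ x in ball (0 : V2) l, ENNReal.ofReal (Real.sqrt (1 + frobSq (fderiv ℝ vortex x)))

/-- The `L¹`-relaxed area of the graph of the vortex map over `B_l`:
the infimum of `liminf_k 𝒜(v_k, B_l)` over all sequences `(v_k)` of maps that are
`C¹` on `B_l` and converge to the vortex map in `L¹(B_l, ℝ²)`. -/
def relaxedArea (l : ℝ) : ℝ≥0∞ :=
  sInf { a : ℝ≥0∞ | ∃ v : ℕ → V2 → V2,
    (∀ k, ContDiffOn ℝ 1 (v k) (ball (0 : V2) l)) ∧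
    Tendsto (fun k => ∫⁻ x in ball (0 : V2) l, ENNReal.ofReal ‖v k x - vortex x‖)
      atTop (𝓝 0) ∧
    a = Filter.liminf (fun k => graphArea (v k) (ball (0 : V2) l)) atTop }


lemma lip_mul {f g : V2 → ℝ} {Cf Cg : ℝ≥0} (hf : LipschitzWith Cf f) (hg : LipschitzWith Cg g)
    {Mf Mg : ℝ} (hMf : ∀ x, |f x| ≤ Mf) (hMg : ∀ x, f x ≠ 0 → |g x| ≤ Mg) :
    ∃ C : ℝ≥0, LipschitzWith C (fun x => f x * g x) := by
  have hMf0 : 0 ≤ Mf := (abs_nonneg _).trans (hMf 0)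
  have key : ∀ x y, f x ≠ 0 → |f x * g x - f y * g y| ≤ (Cf * |Mg| + Mf * Cg) * dist x y := by
    intro x y hx
    have h1 : f x * g x - f y * g y = (f x - f y) * g x + f y * (g x - g y) := by ring
    have h2 := hf.dist_le_mul x y
    have h3 := hg.dist_le_mul x y
    rw [Real.dist_eq] at h2 h3
    rw [h1]
    refine (abs_add_le _ _).trans ?_
    rw [abs_mul, abs_mul]
    have h4 : |f x - f y| * |g x| ≤ (Cf * dist x y) * |Mg| :=
      mul_le_mul h2 ((hMg x hx).trans (le_abs_self _)) (abs_nonneg _) (by positivity)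
    have h5 : |f y| * |g x - g y| ≤ Mf * (Cg * dist x y) :=
      mul_le_mul (hMf y) h3 (abs_nonneg _) hMf0
    linarith
  refine ⟨⟨Cf * |Mg| + Mf * Cg, by positivity⟩, LipschitzWith.of_dist_le_mul fun x y => ?_⟩
  rw [Real.dist_eq]
  show _ ≤ (Cf * |Mg| + Mf * Cg) * dist x y
  by_cases hx : f x = 0
  · by_cases hy : f y = 0
    · simp only [hx, hy, zero_mul, sub_zero, abs_zero]; positivity
    · rw [abs_sub_comm, dist_comm]; exact key y x hy
  · exact key x y hx

lemma frontier_cross {A : Set V2} {x y : V2} (hx : x ∈ A) (hy : y ∉ A) :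
    ∃ z ∈ frontier A, z ∈ segment ℝ x y := by
  by_contra hcon
  push Not at hcon
  have hpre : IsPreconnected (segment ℝ x y) := (convex_segment x y).isPreconnected
  have hintg : ∀ z ∈ segment ℝ x y, z ∈ interior A ∪ (closure A)ᶜ := by
    intro z hz
    by_contra h
    simp only [Set.mem_union, Set.mem_compl_iff, not_or, not_not] at h
    exact hcon z ⟨h.2, h.1⟩ hz
  have hxs := left_mem_segment ℝ x y
  have hys := right_mem_segment ℝ x y
  have h1 : x ∈ interior A := by
    rcases hintg x hxs with h | h
    · exact h
    · exact absurd (subset_closure hx) h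
  have h2 : y ∈ (closure A)ᶜ := by
    rcases hintg y hys with h | h
    · exact absurd (interior_subset h) hy
    · exact h
  obtain ⟨z, -, hz1, hz2⟩ := hpre _ _ isOpen_interior isClosed_closure.isOpen_compl hintg
    ⟨x, hxs, h1⟩ ⟨y, hys, h2⟩
  exact hz2 (subset_closure (interior_subset hz1))

lemma lip_indicator {A : Set V2} {g : V2 → ℝ} {C : ℝ≥0} (hg : LipschitzWith C g)
    (h0 : ∀ x ∈ frontier A, g x = 0) : LipschitzWith C (A.indicator g) := by
  have key : ∀ x y, x ∈ A → y ∉ A → |g x| ≤ C * dist x y := by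
    intro x y hx hy
    obtain ⟨z, hz, hzs⟩ := frontier_cross hx hy
    have h1 := hg.dist_le_mul x z
    rw [h0 z hz, Real.dist_eq, sub_zero] at h1
    have h2 : dist x z ≤ dist x y := by
      have := dist_add_dist_of_mem_segment hzs
      linarith [dist_nonneg (x := z) (y := y)]
    exact h1.trans (by gcongr)
  refine LipschitzWith.of_dist_le_mul fun x y => ?_
  by_cases hx : x ∈ A <;> by_cases hy : y ∈ A
  · simpa [hx, hy] using hg.dist_le_mul x y
  · simpa [hx, hy, Real.dist_eq] using key x y hx hy
  · have := key y x hy hx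
    rw [dist_comm] at this
    simpa [hx, hy, Real.dist_eq] using this
  · simp [hx, hy]; positivity

lemma fderiv_indicator {A : Set V2} {g : V2 → ℝ}
    (h0 : ∀ x ∈ frontier A, g =ᶠ[𝓝 x] 0) (x : V2) :
    fderiv ℝ (A.indicator g) x = A.indicator (fderiv ℝ g) x := by
  by_cases hf : x ∈ frontier A
  · have h1 := h0 x hf
    have h2 : A.indicator g =ᶠ[𝓝 x] 0 := by
      filter_upwards [h1] with y hy
      by_cases hyA : y ∈ A <;> simp [hyA]
      simpa using hy
    rw [h2.fderiv_eq]
    have h3 : fderiv ℝ g x = 0 := by rw [h1.fderiv_eq]; simp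
    by_cases hxA : x ∈ A <;> simp [hxA, h3]
  · by_cases hxA : x ∈ A
    · have hi : A ∈ 𝓝 x := by
        rw [mem_interior_iff_mem_nhds.symm]
        by_contra h; exact hf ⟨subset_closure hxA, h⟩
      have h2 : A.indicator g =ᶠ[𝓝 x] g := by
        filter_upwards [hi] with y hy
        simp [hy]
      rw [h2.fderiv_eq]; simp [hxA]
    · have hi : Aᶜ ∈ 𝓝 x := by
        have : x ∉ closure A := by
          intro h; exact hf ⟨h, fun h' => hxA (interior_subset h')⟩
        exact mem_of_superset (isClosed_closure.isOpen_compl.mem_nhds this)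
          (Set.compl_subset_compl.2 subset_closure)
      have h2 : A.indicator g =ᶠ[𝓝 x] 0 := by
        filter_upwards [hi] with y hy
        have : y ∉ A := hy
        simp [this]
      rw [h2.fderiv_eq]; simp [hxA]

/-- rotation by ninety degrees -/
def rotX (x : V2) : V2 := !₂[-x 1, x 0]

lemma rotX_eq (x : V2) : rotX x = (-x 1) • EuclideanSpace.single 0 (1:ℝ)
    + x 0 • EuclideanSpace.single 1 (1:ℝ) := by
  ext i; fin_cases i <;> simp [rotX]

lemma normSq_eq (x : V2) : ‖x‖ ^ 2 = x 0 ^ 2 + x 1 ^ 2 := by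
  rw [EuclideanSpace.norm_sq_eq]; simp

lemma norm_rotX (x : V2) : ‖rotX x‖ = ‖x‖ := by
  have : ‖rotX x‖ ^ 2 = ‖x‖ ^ 2 := by
    rw [normSq_eq, normSq_eq]; simp [rotX]; ring
  exact (pow_left_inj₀ (norm_nonneg _) (norm_nonneg _) two_ne_zero).1 this

lemma fderiv_rotX (g : V2 → ℝ) (x : V2) : fderiv ℝ g x (rotX x) =
    (-x 1) * fderiv ℝ g x (EuclideanSpace.single 0 1)
      + x 0 * fderiv ℝ g x (EuclideanSpace.single 1 1) := by
  rw [rotX_eq]; simp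

lemma measurable_T (g : V2 → ℝ) : Measurable (fun x => fderiv ℝ g x (rotX x)) := by
  simp_rw [fderiv_rotX]
  have h1 := measurable_fderiv_apply_const ℝ g (EuclideanSpace.single 0 (1:ℝ))
  have h2 := measurable_fderiv_apply_const ℝ g (EuclideanSpace.single 1 (1:ℝ))
  have h3 : Measurable (fun x : V2 => x 1) := by fun_prop
  have h4 : Measurable (fun x : V2 => x 0) := by fun_prop
  exact (h3.neg.mul h1).add (h4.mul h2)

lemma norm_T_le {g : V2 → ℝ} {C : ℝ≥0} (hg : LipschitzWith C g) (x : V2) :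
    |fderiv ℝ g x (rotX x)| ≤ C * ‖x‖ := by
  have h := (fderiv ℝ g x).le_opNorm (rotX x)
  rw [norm_rotX] at h
  exact h.trans (by gcongr; exact norm_fderiv_le_of_lipschitz ℝ hg)

lemma lip_coord (i : Fin 2) : LipschitzWith 1 (fun x : V2 => x i) := by
  refine LipschitzWith.of_dist_le_mul fun x y => ?_
  rw [Real.dist_eq, dist_eq_norm]
  simpa using PiLp.norm_apply_le (x - y) i

lemma coord_lineDeriv (i j : Fin 2) (hij : i ≠ j) (x : V2) :
    lineDeriv ℝ (fun x : V2 => x i) x (EuclideanSpace.single j 1) = 0 := by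
  have h : HasFDerivAt (fun x : V2 => x i) (EuclideanSpace.proj i : V2 →L[ℝ] ℝ) x :=
    (EuclideanSpace.proj i : V2 →L[ℝ] ℝ).hasFDerivAt
  rw [(h.hasLineDerivAt _).lineDeriv]
  simp [hij]

lemma integral_T_eq_zero {g : V2 → ℝ} {C : ℝ≥0} (hg : LipschitzWith C g)
    (hc : HasCompactSupport g) : ∫ x, fderiv ℝ g x (rotX x) = 0 := by
  have key : ∀ i j : Fin 2, i ≠ j →
      ∫ x : V2, x i * fderiv ℝ g x (EuclideanSpace.single j 1) = 0 := by
    intro i j hij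
    have h := LipschitzWith.integral_lineDeriv_mul_eq (μ := (volume : Measure V2)) (lip_coord i) hg hc
      (EuclideanSpace.single j 1)
    simp only [coord_lineDeriv i j hij, zero_mul, integral_zero] at h
    have h2 : ∫ x : V2, -(x i * fderiv ℝ g x (EuclideanSpace.single j 1)) = 0 := by
      rw [h]
      apply integral_congr_ae
      filter_upwards [hg.ae_differentiableAt] with x hx
      rw [hx.lineDeriv_eq_fderiv]
      simp; ring
    rw [integral_neg] at h2
    linarith
  have hintg : ∀ i j : Fin 2,
      Integrable (fun x : V2 => x i * fderiv ℝ g x (EuclideanSpace.single j 1)) := by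
    intro i j
    have hm : Measurable (fun x : V2 => x i * fderiv ℝ g x (EuclideanSpace.single j 1)) := by
      have h3 : Measurable (fun x : V2 => x i) := by fun_prop
      exact h3.mul (measurable_fderiv_apply_const ℝ g _)
    have hK : IsCompact (tsupport g) := hc
    obtain ⟨R, hR⟩ := hK.isBounded.exists_norm_le
    rw [← integrableOn_iff_integrable_of_support_subset (s := tsupport g)]
    · refine Measure.integrableOn_of_bounded (M := R * C) hK.measure_lt_top.ne
        hm.aestronglyMeasurable ?_
      refine (ae_restrict_mem hK.measurableSet).mono fun x hx => ?_
      rw [norm_mul]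
      have h1 : ‖x i‖ ≤ R := (PiLp.norm_apply_le x i).trans (hR x hx)
      have h2 : ‖fderiv ℝ g x (EuclideanSpace.single j 1)‖ ≤ C := by
        refine ((fderiv ℝ g x).le_opNorm _).trans ?_
        simpa using norm_fderiv_le_of_lipschitz ℝ hg
      exact mul_le_mul h1 h2 (norm_nonneg _) ((norm_nonneg _).trans h1)
    · intro x hx
      by_contra hx'
      apply hx
      have : fderiv ℝ g x = 0 := by
        by_contra h
        exact hx' (support_fderiv_subset ℝ h)
      simp [this]
  simp_rw [fderiv_rotX]
  have e : ∀ x : V2, (-x 1) * fderiv ℝ g x (EuclideanSpace.single 0 1)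
      + x 0 * fderiv ℝ g x (EuclideanSpace.single 1 1) =
      x 0 * fderiv ℝ g x (EuclideanSpace.single 1 1)
      - x 1 * fderiv ℝ g x (EuclideanSpace.single 0 1) := fun x => by ring
  simp_rw [e]
  rw [integral_sub (hintg 0 1) (hintg 1 0), key 1 0 (by decide), key 0 1 (by decide)]
  simp

/-- Lipschitz cutoff vanishing on a ball -/
def cutB (c : V2) (r : ℝ) (x : V2) : ℝ := max 0 (min 1 (dist x c / r - 1))

lemma cutB_lip (c : V2) {r : ℝ} (hr : 0 < r) : LipschitzWith (Real.toNNReal (1 / r)) (cutB c r) := by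
  have h1 : LipschitzWith (Real.toNNReal (1 / r)) (fun x : V2 => dist x c / r - 1) := by
    refine LipschitzWith.of_dist_le_mul fun x y => ?_
    rw [Real.dist_eq, Real.coe_toNNReal _ (by positivity)]
    have : dist x c / r - 1 - (dist y c / r - 1) = (1 / r) * (dist x c - dist y c) := by
      field_simp; ring
    rw [this, abs_mul, abs_of_pos (by positivity)]
    gcongr
    exact abs_dist_sub_le x y c
  exact (h1.const_min 1).const_max 0

lemma psi_exists (ι : Finset ℕ) (c : ℕ → V2) (r : ℕ → ℝ) (hr : ∀ i ∈ ι, 0 < r i) :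
    ∃ (ψ : V2 → ℝ) (C : ℝ≥0), LipschitzWith C ψ ∧ (∀ x, 0 ≤ ψ x) ∧ (∀ x, ψ x ≤ 1) ∧
      (∀ i ∈ ι, ∀ x ∈ ball (c i) (r i), ψ x = 0) ∧
      (∀ x, 1 - ψ x ≤ ∑ i ∈ ι, (closedBall (c i) (2 * r i)).indicator (fun _ => (1:ℝ)) x) ∧
      (∀ᵐ x, ∀ v, |fderiv ℝ ψ x v| ≤
        (∑ i ∈ ι, (closedBall (c i) (2 * r i)).indicator (fun _ => 1 / r i) x) * ‖v‖) := by
  classical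
  induction ι using Finset.induction_on with
  | empty =>
    refine ⟨fun _ => 1, 0, LipschitzWith.const 1, by simp, by simp, by simp, by simp, ?_⟩
    exact ae_of_all _ fun x v => by simp
  | insert j ι hj ih =>
    obtain ⟨ψ, C, hL, h0, h1, hz, hs, hd⟩ := ih fun i hi => hr i (Finset.mem_insert_of_mem hi)
    have hrj := hr j (Finset.mem_insert_self _ _)
    set φ := cutB (c j) (r j) with hφ
    have hφL := cutB_lip (c j) hrj
    have hφ0 : ∀ x, 0 ≤ φ x := fun x => le_max_left _ _
    have hφ1 : ∀ x, φ x ≤ 1 := fun x => max_le zero_le_one (min_le_left _ _)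
    have hφout : ∀ x, x ∉ closedBall (c j) (2 * r j) → φ x = 1 := by
      intro x hx
      rw [mem_closedBall, not_le] at hx
      have : 1 ≤ dist x (c j) / r j - 1 := by
        rw [le_sub_iff_add_le, le_div_iff₀ hrj]; linarith
      simp [hφ, cutB, this]
    have hφin : ∀ x ∈ ball (c j) (r j), φ x = 0 := by
      intro x hx
      rw [mem_ball] at hx
      have : dist x (c j) / r j - 1 ≤ 0 := by
        rw [sub_nonpos, div_le_one hrj]; exact hx.le
      simp only [hφ, cutB]
      exact max_eq_left ((min_le_right _ _).trans this)
    obtain ⟨C', hC'⟩ := lip_mul hφL hL (Mf := 1) (Mg := 1)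
      (fun x => abs_le.2 ⟨by linarith [hφ0 x], hφ1 x⟩)
      (fun x _ => abs_le.2 ⟨by linarith [h0 x], h1 x⟩)
    refine ⟨fun x => φ x * ψ x, C', hC', fun x => mul_nonneg (hφ0 x) (h0 x),
      fun x => mul_le_one₀ (hφ1 x) (h0 x) (h1 x), ?_, ?_, ?_⟩
    · intro i hi x hx
      rcases Finset.mem_insert.1 hi with rfl | hi
      · simp [hφin x hx]
      · simp [hz i hi x hx]
    · intro x
      rw [Finset.sum_insert hj]
      have e1 : 1 - φ x * ψ x = (1 - φ x) + φ x * (1 - ψ x) := by ring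
      have e2 : φ x * (1 - ψ x) ≤ 1 - ψ x :=
        mul_le_of_le_one_left (by linarith [h1 x]) (hφ1 x)
      have e3 : 1 - φ x ≤ (closedBall (c j) (2 * r j)).indicator (fun _ => (1:ℝ)) x := by
        by_cases hx : x ∈ closedBall (c j) (2 * r j)
        · rw [Set.indicator_of_mem hx]; linarith [hφ0 x]
        · rw [Set.indicator_of_notMem hx, hφout x hx]; simp
      linarith [hs x]
    · filter_upwards [hd, hφL.ae_differentiableAt, hL.ae_differentiableAt] with x hx hxφ hxψ v
      have hdd : fderiv ℝ (fun x => φ x * ψ x) x = φ x • fderiv ℝ ψ x + ψ x • fderiv ℝ φ x :=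
        (hxφ.hasFDerivAt.mul hxψ.hasFDerivAt).fderiv
      rw [hdd, Finset.sum_insert hj]
      simp only [add_apply, smul_apply, smul_eq_mul]
      have e3 : |fderiv ℝ φ x v| ≤
          (closedBall (c j) (2 * r j)).indicator (fun _ => 1 / r j) x * ‖v‖ := by
        by_cases hx : x ∈ closedBall (c j) (2 * r j)
        · rw [Set.indicator_of_mem hx]
          refine ((fderiv ℝ φ x).le_opNorm v).trans ?_
          gcongr
          refine (norm_fderiv_le_of_lipschitz ℝ hφL).trans ?_
          rw [Real.coe_toNNReal _ (by positivity)]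
        · rw [Set.indicator_of_notMem hx]
          have : φ =ᶠ[𝓝 x] fun _ => 1 := by
            filter_upwards [isClosed_closedBall.isOpen_compl.mem_nhds hx] with y hy
            exact hφout y hy
          rw [this.fderiv_eq]; simp
      refine (abs_add_le _ _).trans ?_
      rw [abs_mul, abs_mul, abs_of_nonneg (hφ0 x), abs_of_nonneg (h0 x)]
      have e4 := mul_le_of_le_one_left (abs_nonneg (fderiv ℝ ψ x v)) (hφ1 x)
      have e5 := mul_le_of_le_one_left (abs_nonneg (fderiv ℝ φ x v)) (h1 x)
      have := hx v
      rw [add_mul]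
      linarith

lemma cover_exists (S : Set V2) (hS : IsCompact S) (hH : μH[1] S < ⊤) {δ : ℝ} (hδ : 0 < δ) :
    ∃ (ι : Finset ℕ) (c : ℕ → V2) (r : ℕ → ℝ), (∀ i ∈ ι, 0 < r i ∧ r i ≤ δ) ∧
      S ⊆ ⋃ i ∈ ι, ball (c i) (r i) ∧ ∑ i ∈ ι, r i ≤ (μH[1] S).toReal + 2 := by
  classical
  have hδ2 : (0 : ℝ≥0∞) < ENNReal.ofReal (δ / 2) := by simpa using hδ
  have hlt : (⨅ (t : ℕ → Set V2) (_ : S ⊆ ⋃ n, t n) (_ : ∀ n, ediam (t n) ≤ ENNReal.ofReal (δ / 2)),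
          ∑' n, ⨆ _ : (t n).Nonempty, ediam (t n) ^ (1:ℝ)) < μH[1] S + 1 := by
    refine lt_of_le_of_lt ?_ (ENNReal.lt_add_right hH.ne one_ne_zero)
    rw [Measure.hausdorffMeasure_apply]
    exact le_iSup₂_of_le (ENNReal.ofReal (δ / 2)) hδ2 le_rfl
  simp only [iInf_lt_iff] at hlt
  obtain ⟨t, hcov, hdiam, hsum⟩ := hlt
  have hterm : ∀ n, (⨆ _ : (t n).Nonempty, ediam (t n) ^ (1:ℝ)) = ediam (t n) := by
    intro n
    rcases (t n).eq_empty_or_nonempty with h | h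
    · simp [h]
    · simp [h]
  simp only [hterm] at hsum
  have hfin : ∀ n, ediam (t n) ≠ ⊤ := fun n =>
    ((hdiam n).trans_lt ENNReal.ofReal_lt_top).ne
  let c : ℕ → V2 := fun n => if h : (t n).Nonempty then h.some else 0
  let r : ℕ → ℝ := fun n => (ediam (t n)).toReal + min (δ / 2) 1 * (1 / 2) ^ (n + 1)
  have hmin : 0 < min (δ / 2) 1 := by positivity
  have hrpos : ∀ n, 0 < r n := fun n => by positivity
  have hrle : ∀ n, r n ≤ δ := by
    intro n
    have h1 : (ediam (t n)).toReal ≤ δ / 2 :=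
      ENNReal.toReal_le_of_le_ofReal (by positivity) (hdiam n)
    have h2 : min (δ / 2) 1 * (1 / 2 : ℝ) ^ (n + 1) ≤ δ / 2 * 1 := by
      gcongr
      · exact min_le_left _ _
      · exact pow_le_one₀ (by norm_num) (by norm_num)
    show _ + _ ≤ _
    linarith
  have hcov2 : S ⊆ ⋃ n, ball (c n) (r n) := by
    intro x hx
    obtain ⟨n, hn⟩ := Set.mem_iUnion.1 (hcov hx)
    refine Set.mem_iUnion.2 ⟨n, ?_⟩
    have hne : (t n).Nonempty := ⟨x, hn⟩
    have hc : c n ∈ t n := by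
      simp only [c, hne, dif_pos]; exact hne.some_mem
    rw [mem_ball, dist_edist]
    have h1 : (edist x (c n)).toReal ≤ (ediam (t n)).toReal :=
      ENNReal.toReal_mono (hfin n) (edist_le_ediam_of_mem hn hc)
    have h2 : 0 < min (δ / 2) 1 * (1 / 2 : ℝ) ^ (n + 1) := by positivity
    show _ < _ + _
    linarith
  obtain ⟨ι, hι⟩ := hS.elim_finite_subcover _ (fun n => isOpen_ball) hcov2
  refine ⟨ι, c, r, fun i _ => ⟨hrpos i, hrle i⟩, hι, ?_⟩
  have hs1 : ∑ i ∈ ι, (ediam (t i)).toReal ≤ (μH[1] S).toReal + 1 := by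
    rw [← ENNReal.toReal_sum (fun i _ => hfin i)]
    have : (μH[1] S).toReal + 1 = (μH[1] S + 1).toReal := by
      rw [ENNReal.toReal_add hH.ne ENNReal.one_ne_top]; simp
    rw [this]
    exact ENNReal.toReal_mono (by simp [hH.ne]) ((ENNReal.sum_le_tsum ι).trans hsum.le)
  have hs2 : ∑ i ∈ ι, min (δ / 2) 1 * (1 / 2 : ℝ) ^ (i + 1) ≤ 1 := by
    have h1 : ∑ i ∈ ι, min (δ / 2) 1 * (1 / 2 : ℝ) ^ (i + 1) ≤ ∑ i ∈ ι, (1 / 2 : ℝ) * (1 / 2) ^ i := by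
      apply Finset.sum_le_sum
      intro i _
      rw [pow_succ]
      have : min (δ / 2) 1 ≤ 1 := min_le_right _ _
      have h3 : (0:ℝ) < (1/2) ^ i := by positivity
      nlinarith
    refine h1.trans ?_
    rw [← Finset.mul_sum]
    have := summable_geometric_two.sum_le_tsum ι (fun i _ => by positivity)
    rw [tsum_geometric_two] at this
    linarith
  show ∑ i ∈ ι, (_ + _) ≤ _
  rw [Finset.sum_add_distrib]
  linarith

lemma vortex_frob (x : V2) (hx : x ≠ 0) : frobSq (fderiv ℝ vortex x) = 1 / ‖x‖ ^ 2 := by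
  have hr : 0 < ‖x‖ := norm_pos_iff.2 hx
  have h1 : HasFDerivAt (fun y : V2 => ‖y‖ ^ 2) (2 • innerSL ℝ x) x :=
    (hasStrictFDerivAt_norm_sq x).hasFDerivAt
  have h2 : HasFDerivAt (fun y : V2 => ‖y‖) ((1 / (2 * ‖x‖)) • (2 • innerSL ℝ x)) x := by
    have := h1.sqrt (by positivity)
    simpa [Real.sqrt_sq] using this
  have h3 : HasFDerivAt (fun y : V2 => ‖y‖⁻¹)
      (-(‖x‖ ^ 2)⁻¹ • ((1 / (2 * ‖x‖)) • (2 • innerSL ℝ x))) x :=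
    (hasDerivAt_inv hr.ne').comp_hasFDerivAt x h2
  have h4 := h3.smul (hasFDerivAt_id x)
  have h5 : HasFDerivAt vortex _ x := h4
  have hn := normSq_eq x
  have key : ∀ i j : Fin 2, fderiv ℝ vortex x (EuclideanSpace.single j 1) i =
      ‖x‖⁻¹ * (EuclideanSpace.single j (1:ℝ) : V2) i - (‖x‖ ^ 3)⁻¹ * x j * x i := by
    intro i j
    rw [h5.fderiv]
    simp only [id, add_apply, smul_apply, ContinuousLinearMap.smulRight_apply, PiLp.add_apply,
      PiLp.smul_apply, smul_eq_mul, innerSL_apply_apply, EuclideanSpace.inner_single_right]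
    simp
    field_simp
    ring
  unfold frobSq
  simp only [key, Fin.sum_univ_two]
  simp
  field_simp
  have hn4 : ‖x‖ ^ 4 = (x 0 ^ 2 + x 1 ^ 2) ^ 2 := by rw [← hn]; ring
  ring_nf
  ring_nf at hn4 hn
  simp only [hn4, hn]
  ring

lemma alg_bound {r q Fr De : ℝ} (hr : 0 < r) (hq : q ^ 2 ≤ r ^ 4 * Fr) (hDe : 0 ≤ De) :
    (r + q / r ^ 2) / √(1 + r ^ 2) ≤ √(1 + Fr + De) := by
  have hs : (q / r ^ 2) ^ 2 ≤ Fr := by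
    rw [div_pow, div_le_iff₀ (by positivity)]
    calc q ^ 2 ≤ r ^ 4 * Fr := hq
      _ = Fr * (r ^ 2) ^ 2 := by ring
  set s := q / r ^ 2
  rw [div_le_iff₀ (by positivity), ← Real.sqrt_mul (by nlinarith [sq_nonneg s])]
  apply Real.le_sqrt_of_sq_le
  nlinarith [sq_nonneg (1 - r * s), sq_nonneg r]

lemma area_bound (w : V2 → V2) (x : V2) (hx : x ≠ 0) :
    (‖x‖ + (rotX x 0 * fderiv ℝ w x (rotX x) 0 + rotX x 1 * fderiv ℝ w x (rotX x) 1) / ‖x‖ ^ 2)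
      / √(1 + ‖x‖ ^ 2) ≤ areaIntegrand w x := by
  unfold areaIntegrand
  refine alg_bound (norm_pos_iff.2 hx) ?_ (sq_nonneg _)
  set L := fderiv ℝ w x
  have hn := normSq_eq x
  have h4 : ‖x‖ ^ 4 = (x 0 ^ 2 + x 1 ^ 2) ^ 2 := by rw [← hn]; ring
  rw [h4, rotX_eq]
  simp only [frobSq, Fin.sum_univ_two, map_add, map_smul, PiLp.add_apply, PiLp.smul_apply, smul_eq_mul]
  generalize L (EuclideanSpace.single 0 1) 0 = a
  generalize L (EuclideanSpace.single 1 1) 0 = b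
  generalize L (EuclideanSpace.single 0 1) 1 = c
  generalize L (EuclideanSpace.single 1 1) 1 = d
  simp
  generalize x 0 = p
  generalize x 1 = y
  nlinarith [sq_nonneg (y ^ 2 * b + p * y * a), sq_nonneg (y ^ 2 * c + p * y * a),
    sq_nonneg (y ^ 2 * d - p ^ 2 * a), sq_nonneg (p * y * b - p * y * c),
    sq_nonneg (p * y * d + p ^ 2 * b), sq_nonneg (p * y * d + p ^ 2 * c)]

/-- radial weight -/
def Hw (β : ℝ → ℝ) (t : ℝ) : ℝ := β t / (t * √(1 + t))

lemma Hw_contDiff {β : ℝ → ℝ} (hβ : ContDiff ℝ 1 β) {a b : ℝ} (ha : 0 < a)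
    (hs : ∀ t, t ∉ Set.Icc a b → β t = 0) : ContDiff ℝ 1 (Hw β) := by
  rw [contDiff_iff_contDiffAt]
  intro t
  by_cases ht : t < a
  · have : Hw β =ᶠ[𝓝 t] fun _ => 0 := by
      filter_upwards [Iio_mem_nhds ht] with s hs'
      have : β s = 0 := hs s fun h => not_lt.2 h.1 hs'
      simp [Hw, this]
    exact contDiffAt_const.congr_of_eventuallyEq this
  · have ht0 : 0 < t := lt_of_lt_of_le ha (not_lt.1 ht)
    unfold Hw
    refine hβ.contDiffAt.div (contDiffAt_id.mul ?_) (by positivity)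
    exact (contDiffAt_const.add contDiffAt_id).sqrt (by positivity)

lemma radial_T {H : ℝ → ℝ} (hH : ContDiff ℝ 1 H) (x : V2) :
    ∃ L : V2 →L[ℝ] ℝ, HasFDerivAt (fun y : V2 => H (‖y‖ ^ 2)) L x ∧ L (rotX x) = 0 := by
  have h1 : HasFDerivAt (fun y : V2 => ‖y‖ ^ 2) (2 • innerSL ℝ x) x :=
    (hasStrictFDerivAt_norm_sq x).hasFDerivAt
  have h2 := ((hH.differentiable one_ne_zero) (‖x‖ ^ 2)).hasDerivAt.comp_hasFDerivAt x h1
  refine ⟨_, h2, ?_⟩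
  have : inner ℝ x (rotX x) = (0:ℝ) := by
    rw [PiLp.inner_apply]; simp [rotX]; ring
  simp [this]

lemma P_T {h : V2 → ℝ} {w : V2 → V2} {x : V2} (hw : DifferentiableAt ℝ w x)
    {L : V2 →L[ℝ] ℝ} (hh : HasFDerivAt h L x) (hL : L (rotX x) = 0) :
    DifferentiableAt ℝ (fun y => h y * (-(y 1) * w y 0 + y 0 * w y 1)) x ∧
    fderiv ℝ (fun y => h y * (-(y 1) * w y 0 + y 0 * w y 1)) x (rotX x) =
      h x * ((rotX x 0 * fderiv ℝ w x (rotX x) 0 + rotX x 1 * fderiv ℝ w x (rotX x) 1)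
        - (x 0 * w x 0 + x 1 * w x 1)) := by
  have hc : ∀ i : Fin 2, HasFDerivAt (fun y : V2 => y i) (EuclideanSpace.proj i : V2 →L[ℝ] ℝ) x :=
    fun i => (EuclideanSpace.proj i : V2 →L[ℝ] ℝ).hasFDerivAt
  have hwc : ∀ i : Fin 2, HasFDerivAt (fun y : V2 => w y i)
      ((EuclideanSpace.proj i : V2 →L[ℝ] ℝ).comp (fderiv ℝ w x)) x :=
    fun i => (EuclideanSpace.proj i : V2 →L[ℝ] ℝ).hasFDerivAt.comp x hw.hasFDerivAt
  have hd := hh.mul ((((hc 1).neg).mul (hwc 0)).add ((hc 0).mul (hwc 1)))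
  refine ⟨hd.differentiableAt, ?_⟩
  have hd' := hd.fderiv
  refine (congrArg (fun l : V2 →L[ℝ] ℝ => l (rotX x)) hd').trans ?_
  simp [hL]
  have r0 : rotX x 0 = -x 1 := by simp [rotX]
  have r1 : rotX x 1 = x 0 := by simp [rotX]
  rw [r0, r1]
  ring


lemma key_pointwise {β : ℝ → ℝ} (hβ : ∀ t, 0 ≤ β t ∧ β t ≤ 1) {ε lam : ℝ} (hε : 0 < ε)
    (hlam : 0 < lam) (w : V2 → V2) {x : V2} (hx : x ≠ 0) (hβx : β (‖x‖ ^ 2) ≠ 0 → ε ≤ ‖x‖)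
    (hwx : ‖w x - vortex x‖ ≤ lam) :
    (β (‖x‖ ^ 2) * √(1 + 1 / ‖x‖ ^ 2) + Hw β (‖x‖ ^ 2) *
      ((rotX x 0 * fderiv ℝ w x (rotX x) 0 + rotX x 1 * fderiv ℝ w x (rotX x) 1)
        - (x 0 * w x 0 + x 1 * w x 1)) - lam / ε ≤ β (‖x‖ ^ 2) * areaIntegrand w x) ∧
    |Hw β (‖x‖ ^ 2) * (-(x 1) * w x 0 + x 0 * w x 1)| ≤ lam / ε := by
  have hle : 0 ≤ lam / ε := by positivity
  by_cases h0 : β (‖x‖ ^ 2) = 0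
  · simp [Hw, h0, hle]
  have hrε := hβx h0
  have hab := area_bound w x hx
  have hn := normSq_eq x
  have hd : (w x 0 - ‖x‖⁻¹ * x 0) ^ 2 + (w x 1 - ‖x‖⁻¹ * x 1) ^ 2 ≤ lam ^ 2 := by
    have h1 : ‖w x - vortex x‖ ^ 2 ≤ lam ^ 2 := by gcongr
    rw [normSq_eq] at h1
    simpa [vortex] using h1
  have hr : 0 < ‖x‖ := norm_pos_iff.2 hx
  obtain ⟨hb0, hb1⟩ := hβ (‖x‖ ^ 2)
  generalize hq : (rotX x 0 * fderiv ℝ w x (rotX x) 0 + rotX x 1 * fderiv ℝ w x (rotX x) 1) = q at *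
  generalize areaIntegrand w x = ar at *
  set r := ‖x‖ with hrdef
  generalize hB : β (r ^ 2) = B at *
  have hHw : Hw β (r ^ 2) = B / (r ^ 2 * √(1 + r ^ 2)) := by rw [Hw, hB]
  have hs1 : 1 ≤ √(1 + r ^ 2) := Real.one_le_sqrt.2 (by nlinarith)
  have hss : √(1 + r ^ 2) ^ 2 = 1 + r ^ 2 := Real.sq_sqrt (by positivity)
  have hF : √(1 + 1 / r ^ 2) = √(1 + r ^ 2) / r := by
    rw [show 1 + 1 / r ^ 2 = (1 + r ^ 2) / r ^ 2 by field_simp; ring, Real.sqrt_div (by positivity),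
      Real.sqrt_sq hr.le]
  rw [hHw, hF]
  set s := √(1 + r ^ 2) with hsdef
  generalize w x 0 = w0 at *
  generalize w x 1 = w1 at *
  generalize x 0 = x0 at *
  generalize x 1 = x1 at *
  set h := B / (r ^ 2 * s) with hh
  have hh0 : 0 ≤ h := by positivity
  have hhr : h * r ≤ 1 / ε := by
    have : h * r = B / (r * s) := by rw [hh]; field_simp
    rw [this]
    have h2 : ε * 1 ≤ r * s := mul_le_mul hrε hs1 zero_le_one hr.le
    rw [mul_one] at h2
    exact div_le_div₀ zero_le_one hb1 hε h2
  have hhrl : h * (r * lam) ≤ lam / ε := by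
    calc h * (r * lam) = (h * r) * lam := by ring
      _ ≤ (1 / ε) * lam := by gcongr
      _ = lam / ε := by ring
  have hw0 : w0 = (w0 - r⁻¹ * x0) + r⁻¹ * x0 := by ring
  have hw1 : w1 = (w1 - r⁻¹ * x1) + r⁻¹ * x1 := by ring
  generalize w0 - r⁻¹ * x0 = d0 at *
  generalize w1 - r⁻¹ * x1 = d1 at *
  have hCS1 : |x0 * d0 + x1 * d1| ≤ r * lam := by
    apply abs_le_of_sq_le_sq _ (by positivity)
    rw [mul_pow, hn]
    nlinarith [sq_nonneg (x0 * d1 - x1 * d0), mul_le_mul_of_nonneg_left hd (by positivity : 0 ≤ x0 ^ 2 + x1 ^ 2)]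
  have hCS2 : |-x1 * d0 + x0 * d1| ≤ r * lam := by
    apply abs_le_of_sq_le_sq _ (by positivity)
    rw [mul_pow, hn]
    nlinarith [sq_nonneg (x0 * d0 + x1 * d1), mul_le_mul_of_nonneg_left hd (by positivity : 0 ≤ x0 ^ 2 + x1 ^ 2)]
  have e1 : x0 * w0 + x1 * w1 = (x0 * d0 + x1 * d1) + r := by
    have : r = r⁻¹ * (x0 ^ 2 + x1 ^ 2) := by rw [← hn]; field_simp
    rw [hw0, hw1]; linear_combination (-1 : ℝ) * this
  have e2 : -x1 * w0 + x0 * w1 = -x1 * d0 + x0 * d1 := by rw [hw0, hw1]; ring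
  constructor
  · rw [e1]
    have h3 : B * ((r + q / r ^ 2) / s) ≤ B * ar := mul_le_mul_of_nonneg_left hab hb0
    have h4 : B * ((r + q / r ^ 2) / s) = B * (s / r) + h * (q - r) := by
      rw [hh]
      field_simp
      linear_combination (-r) * hss
    have h5 : -(r * lam) ≤ x0 * d0 + x1 * d1 := (abs_le.1 hCS1).1
    have h6 := mul_le_mul_of_nonneg_left h5 hh0
    have h7 : h * (q - (x0 * d0 + x1 * d1 + r)) = h * (q - r) - h * (x0 * d0 + x1 * d1) := by ring
    have h8 : h * -(r * lam) = -(h * (r * lam)) := by ring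
    rw [h7]
    linarith
  · rw [e2, abs_mul, abs_of_nonneg hh0]
    exact (mul_le_mul_of_nonneg_left hCS2 hh0).trans hhrl

lemma ofReal_integral_le {μ : Measure V2} {R : V2 → ℝ} (hR : Integrable R μ) {f : V2 → ℝ}
    (h : ∀ᵐ x ∂μ, R x ≤ f x) : ENNReal.ofReal (∫ x, R x ∂μ) ≤ ∫⁻ x, ENNReal.ofReal (f x) ∂μ := by
  have h1 : ∫ x, R x ∂μ ≤ ∫ x, max (R x) 0 ∂μ :=
    integral_mono hR hR.pos_part fun x => le_max_left _ _
  calc ENNReal.ofReal (∫ x, R x ∂μ) ≤ ENNReal.ofReal (∫ x, max (R x) 0 ∂μ) :=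
        ENNReal.ofReal_le_ofReal h1
    _ = ∫⁻ x, ENNReal.ofReal (max (R x) 0) ∂μ :=
        ofReal_integral_eq_lintegral_ofReal hR.pos_part (ae_of_all _ fun x => le_max_right _ _)
    _ ≤ ∫⁻ x, ENNReal.ofReal (f x) ∂μ := by
        apply lintegral_mono_ae
        filter_upwards [h] with x hx
        rw [ENNReal.ofReal_max]
        simpa using ENNReal.ofReal_le_ofReal hx

lemma vortex_contAt {x : V2} (hx : x ≠ 0) : ContinuousAt vortex x :=
  (continuous_norm.continuousAt.inv₀ (norm_ne_zero_iff.2 hx)).smul continuousAt_id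

lemma F_bound {β : ℝ → ℝ} (hβ : ∀ t, 0 ≤ β t ∧ β t ≤ 1) {ε : ℝ} (hε : 0 < ε)
    {x : V2} (hβx : β (‖x‖ ^ 2) ≠ 0 → ε ≤ ‖x‖) :
    0 ≤ β (‖x‖ ^ 2) * √(1 + 1 / ‖x‖ ^ 2) ∧ β (‖x‖ ^ 2) * √(1 + 1 / ‖x‖ ^ 2) ≤ 1 + 1 / ε := by
  refine ⟨mul_nonneg (hβ _).1 (Real.sqrt_nonneg _), ?_⟩
  by_cases h0 : β (‖x‖ ^ 2) = 0
  · rw [h0, zero_mul]; positivity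
  · have hr := hβx h0
    have hr0 : 0 < ‖x‖ := hε.trans_le hr
    have h1 : √(1 + 1 / ‖x‖ ^ 2) ≤ 1 + 1 / ε := by
      apply Real.sqrt_le_iff.2 ⟨by positivity, ?_⟩
      have h2 : 1 / ‖x‖ ≤ 1 / ε := one_div_le_one_div_of_le hε hr
      have h3 : 0 < 1 / ‖x‖ := by positivity
      have h4 : 1 / ‖x‖ ^ 2 = (1 / ‖x‖) ^ 2 := by rw [div_pow, one_pow]
      rw [h4]; nlinarith
    calc _ ≤ 1 * √(1 + 1 / ‖x‖ ^ 2) := by gcongr; exact (hβ _).2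
      _ ≤ _ := by linarith

lemma etaF_measurable {β : ℝ → ℝ} (hβ : Continuous β) :
    Measurable (fun x : V2 => β (‖x‖ ^ 2) * √(1 + 1 / ‖x‖ ^ 2)) := by
  have h1 : Measurable (fun x : V2 => β (‖x‖ ^ 2)) := hβ.measurable.comp (by fun_prop)
  have h2 : Measurable (fun x : V2 => √(1 + 1 / ‖x‖ ^ 2)) := by fun_prop
  exact h1.mul h2

lemma P_lip {β : ℝ → ℝ} (hβ : ContDiff ℝ 1 β) {a b : ℝ} (ha : 0 < a)
    (hs : ∀ t, t ∉ Set.Icc a b → β t = 0) {w : V2 → V2} {K : ℝ≥0} (hw : LipschitzWith K w)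
    (hKc : IsCompact {x : V2 | ‖x‖ ^ 2 ∈ Set.Icc a b}) :
    ∃ C : ℝ≥0, LipschitzWith C
      (fun y : V2 => Hw β (‖y‖ ^ 2) * (-(y 1) * w y 0 + y 0 * w y 1)) := by
  have hH : ContDiff ℝ 1 (fun y : V2 => Hw β (‖y‖ ^ 2)) :=
    (Hw_contDiff hβ ha hs).comp (contDiff_norm_sq ℝ)
  have hz : ∀ y : V2, y ∉ {x : V2 | ‖x‖ ^ 2 ∈ Set.Icc a b} → Hw β (‖y‖ ^ 2) = 0 := by
    intro y hy
    simp [Hw, hs _ hy]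
  have key : ∀ (i j : Fin 2), ∃ C : ℝ≥0, LipschitzWith C
      (fun y : V2 => (Hw β (‖y‖ ^ 2) * y i) * w y j) := by
    intro i j
    have hcd : ContDiff ℝ 1 (fun y : V2 => Hw β (‖y‖ ^ 2) * y i) :=
      hH.mul (EuclideanSpace.proj i : V2 →L[ℝ] ℝ).contDiff
    have hcs : HasCompactSupport (fun y : V2 => Hw β (‖y‖ ^ 2) * y i) :=
      HasCompactSupport.intro hKc fun y hy => by simp [hz y hy]
    obtain ⟨C, hC⟩ := ContDiff.lipschitzWith_of_hasCompactSupport hcs hcd one_ne_zero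
    obtain ⟨M, hM⟩ := hcd.continuous.bounded_above_of_compact_support hcs
    have hwj : LipschitzWith (1 * K) (fun y => w y j) := (lip_coord j).comp hw
    obtain ⟨M', hM'⟩ := hKc.exists_bound_of_continuousOn hwj.continuous.continuousOn
    refine lip_mul hC hwj hM (Mg := M') fun y hy => hM' y ?_
    by_contra h
    exact hy (by simp [hz y h])
  obtain ⟨C1, h1⟩ := key 1 0
  obtain ⟨C2, h2⟩ := key 0 1
  refine ⟨C2 + C1, ?_⟩
  have := h2.sub h1
  have e : (fun y : V2 => Hw β (‖y‖ ^ 2) * (-(y 1) * w y 0 + y 0 * w y 1)) =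
      fun y : V2 => (Hw β (‖y‖ ^ 2) * y 0) * w y 1 - (Hw β (‖y‖ ^ 2) * y 1) * w y 0 := by
    funext y; ring
  rw [e]
  exact this

lemma frontier_zero {β : ℝ → ℝ} {a b l lam : ℝ} (ha : 0 < a) (hl : 0 < l) (hb : b < l ^ 2)
    (hs : ∀ t, t ∉ Set.Icc a b → β t = 0) {w : V2 → V2} (hw : Continuous w)
    (B : V2 → ℝ) (ψ : V2 → ℝ)
    (U : Set V2) (hU : IsOpen U) (hψU : ∀ x ∈ U, ψ x = 0)
    (hcov : ∀ x : V2, ‖x‖ ^ 2 ∈ Set.Icc a b → ‖w x - vortex x‖ = lam → x ∈ U) (x : V2)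
    (hx : x ∈ frontier (ball (0 : V2) l \ {x : V2 | x ∈ ball (0 : V2) l \ {0} ∧
      lam < ‖w x - vortex x‖})) :
    (fun y => Hw β (‖y‖ ^ 2) * B y * ψ y) =ᶠ[𝓝 x] 0 := by
  by_cases hxK : ‖x‖ ^ 2 ∈ Set.Icc a b
  · have hx0 : x ≠ 0 := by
      rintro rfl
      have := hxK.1
      simp at this
      linarith
    have hxl : ‖x‖ < l := by
      apply lt_of_pow_lt_pow_left₀ 2 hl.le
      linarith [hxK.2]
    have hopen : ∀ᶠ y in 𝓝 x, y ∈ ball (0 : V2) l \ {0} := by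
      apply (isOpen_ball.sdiff isClosed_singleton).mem_nhds
      simp [hx0, hxl]
    have hc : ContinuousAt (fun y => ‖w y - vortex y‖) x :=
      (hw.continuousAt.sub (vortex_contAt hx0)).norm
    have heq : ‖w x - vortex x‖ = lam := by
      rcases lt_trichotomy (‖w x - vortex x‖) lam with h | h | h
      · exfalso
        apply hx.2
        rw [mem_interior_iff_mem_nhds]
        filter_upwards [hopen, hc.eventually_lt_const h] with y hy1 hy2
        exact ⟨hy1.1, fun h' => absurd h'.2 (not_lt.2 hy2.le)⟩
      · exact h
      · exfalso
        have h1 := hx.1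
        rw [mem_closure_iff_frequently] at h1
        apply h1
        filter_upwards [hopen, hc.eventually_const_lt h] with y hy1 hy2 hy3
        exact hy3.2 ⟨hy1, hy2⟩
    filter_upwards [hU.mem_nhds (hcov x hxK heq)] with y hy
    simp [hψU y hy]
  · have : ∀ᶠ y in 𝓝 x, ‖y‖ ^ 2 ∉ Set.Icc a b := by
      have hcl : IsClosed {y : V2 | ‖y‖ ^ 2 ∈ Set.Icc a b} :=
        isClosed_Icc.preimage (by fun_prop)
      exact hcl.isOpen_compl.mem_nhds hxK
    filter_upwards [this] with y hy
    simp [Hw, hs _ hy]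

lemma measA {l lam : ℝ} {w : V2 → V2} (hw : Continuous w) :
    MeasurableSet (ball (0 : V2) l \ {x : V2 | x ∈ ball (0 : V2) l \ {0} ∧
      lam < ‖w x - vortex x‖}) := by
  have hv : Measurable vortex := by unfold vortex; fun_prop
  have h1 : MeasurableSet {x : V2 | lam < ‖w x - vortex x‖} :=
    measurableSet_lt measurable_const ((hw.measurable.sub hv).norm)
  exact measurableSet_ball.diff
    ((measurableSet_ball.diff (measurableSet_singleton _)).inter h1)

lemma isCompact_shell (a b : ℝ) : IsCompact {x : V2 | ‖x‖ ^ 2 ∈ Set.Icc a b} := by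
  have hcl : IsClosed {y : V2 | ‖y‖ ^ 2 ∈ Set.Icc a b} :=
    isClosed_Icc.preimage (by fun_prop)
  refine (isCompact_closedBall (0 : V2) √b).of_isClosed_subset hcl fun x hx => ?_
  simp only [mem_closedBall, dist_zero_right]
  exact Real.le_sqrt_of_sq_le hx.2

lemma ball_int {A : Set V2} (c : V2) {r : ℝ} (hr : 0 < r) (s : ℝ) (hs : 0 ≤ s) :
    ∫ x in A, (closedBall c (2 * r)).indicator (fun _ => s) x ≤ s * (4 * Real.pi * r ^ 2) := by
  have hi : Integrable ((closedBall c (2 * r)).indicator (fun _ : V2 => s)) :=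
    (integrable_indicator_iff measurableSet_closedBall).2
      (integrableOn_const (measure_closedBall_lt_top.ne))
  have h1 : ∫ x in A, (closedBall c (2 * r)).indicator (fun _ => s) x
      ≤ ∫ x, (closedBall c (2 * r)).indicator (fun _ => s) x :=
    setIntegral_le_integral hi (Eventually.of_forall fun x => Set.indicator_nonneg (fun _ _ => hs) x)
  refine h1.trans (le_of_eq ?_)
  rw [integral_indicator_const _ measurableSet_closedBall, Measure.real,
    EuclideanSpace.volume_closedBall_fin_two, ENNReal.toReal_mul, ENNReal.toReal_pow,
    ENNReal.toReal_ofReal (by positivity), ENNReal.toReal_ofReal Real.pi_pos.le, smul_eq_mul]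
  ring

set_option maxHeartbeats 4000000 in
lemma fixed_bound {β : ℝ → ℝ} (hβd : ContDiff ℝ 1 β) (hβ : ∀ t, 0 ≤ β t ∧ β t ≤ 1)
    {a b l ε lam : ℝ} (hε : 0 < ε) (hl : 0 < l) (ha : ε ^ 2 < a) (hb : b < l ^ 2)
    (hs : ∀ t, t ∉ Set.Icc a b → β t = 0) {w : V2 → V2} {K : ℝ≥0} (hw : LipschitzWith K w)
    (hlam : 0 < lam)
    (hH : μH[1] {x : V2 | x ∈ ball (0 : V2) l \ {0} ∧ ‖w x - vortex x‖ = lam} < ⊤)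
    {m : ℝ} (hm : m = (μH[1] {x : V2 | x ∈ ball (0 : V2) l \ {0} ∧
      ‖w x - vortex x‖ = lam}).toReal)
    {A : Set V2} (hA : A = ball (0 : V2) l \ {x : V2 | x ∈ ball (0 : V2) l \ {0} ∧
      lam < ‖w x - vortex x‖}) :
    ENNReal.ofReal ((∫ x in A, β (‖x‖ ^ 2) * √(1 + 1 / ‖x‖ ^ 2)) -
      ((1 + 1 / ε) * (4 * Real.pi * (lam * (m + 2))) +
        (lam / ε * l) * (4 * Real.pi * (m + 2)) + lam / ε * volume.real (ball (0 : V2) l)))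
      ≤ ∫⁻ x in A, ENNReal.ofReal (areaIntegrand w x) := by
  have ha0 : 0 < a := lt_trans (by positivity) ha
  have hKc := isCompact_shell a b
  have hsub : ∀ x : V2, ‖x‖ ^ 2 ∈ Set.Icc a b → x ≠ 0 ∧ ‖x‖ < l := by
    intro x hx
    constructor
    · rintro rfl
      have := hx.1
      simp at this
      linarith
    · apply lt_of_pow_lt_pow_left₀ 2 hl.le
      linarith [hx.2]
  have hβx : ∀ x : V2, β (‖x‖ ^ 2) ≠ 0 → ε ≤ ‖x‖ := by
    intro x hx
    have h1 : ‖x‖ ^ 2 ∈ Set.Icc a b := by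
      by_contra h
      exact hx (hs _ h)
    exact le_of_lt (lt_of_pow_lt_pow_left₀ 2 (norm_nonneg _) (by linarith [h1.1]))
  -- the level set inside the shell
  set SK : Set V2 := {x : V2 | ‖x‖ ^ 2 ∈ Set.Icc a b ∧ ‖w x - vortex x‖ = lam} with hSK
  have hSKc : IsCompact SK := by
    have hc : ContinuousOn (fun y => ‖w y - vortex y‖) {x : V2 | ‖x‖ ^ 2 ∈ Set.Icc a b} :=
      fun x hx => ((hw.continuous.continuousAt.sub
        (vortex_contAt (hsub x hx).1)).norm).continuousWithinAt
    exact hKc.of_isClosed_subset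
      (hc.preimage_isClosed_of_isClosed hKc.isClosed isClosed_singleton) (fun x hx => hx.1)
  have hSKsub : SK ⊆ {x : V2 | x ∈ ball (0 : V2) l \ {0} ∧ ‖w x - vortex x‖ = lam} := by
    intro x hx
    have := hsub x hx.1
    exact ⟨by simp [this.1, this.2], hx.2⟩
  have hSKH : μH[1] SK < ⊤ := (measure_mono hSKsub).trans_lt hH
  obtain ⟨ι, c, r, hr, hcov, hsum⟩ := cover_exists SK hSKc hSKH hlam
  have hsum' : ∑ i ∈ ι, r i ≤ m + 2 := by
    have : (μH[1] SK).toReal ≤ m := by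
      rw [hm]
      exact ENNReal.toReal_mono hH.ne (measure_mono hSKsub)
    linarith
  obtain ⟨ψ, Cψ, hψL, hψ0, hψ1, hψz, hψs, hψd⟩ := psi_exists ι c r fun i hi => (hr i hi).1
  obtain ⟨CP, hPL⟩ := P_lip hβd ha0 hs hw hKc
  set P : V2 → ℝ := fun y => Hw β (‖y‖ ^ 2) * (-(y 1) * w y 0 + y 0 * w y 1) with hP
  have hPz : ∀ y : V2, y ∉ {x : V2 | ‖x‖ ^ 2 ∈ Set.Icc a b} → P y = 0 := by
    intro y hy
    simp [P, Hw, hs _ hy]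
  have hPcs : HasCompactSupport P := HasCompactSupport.intro hKc hPz
  obtain ⟨M, hM⟩ := hPL.continuous.bounded_above_of_compact_support hPcs
  obtain ⟨Cg, hgL⟩ := lip_mul hPL hψL hM (Mg := 1) fun x _ => by
    rw [abs_of_nonneg (hψ0 x)]; exact hψ1 x
  set g : V2 → ℝ := fun x => P x * ψ x with hg
  have hgcs : HasCompactSupport g := hPcs.mul_right
  have hfr : ∀ x ∈ frontier A, g =ᶠ[𝓝 x] 0 := by
    intro x hx
    rw [hA] at hx
    refine frontier_zero ha0 hl hb hs hw.continuous _ ψ (⋃ i ∈ ι, ball (c i) (r i))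
      (isOpen_biUnion fun _ _ => isOpen_ball) ?_ ?_ x hx
    · intro y hy
      simp only [Set.mem_iUnion] at hy
      obtain ⟨i, hi, hy⟩ := hy
      exact hψz i hi y hy
    · intro y hy1 hy2
      exact hcov ⟨hy1, hy2⟩
  have hAm : MeasurableSet A := by rw [hA]; exact measA hw.continuous
  have hAsub : A ⊆ ball (0 : V2) l := by rw [hA]; exact Set.sdiff_subset
  have hTg : ∫ x in A, fderiv ℝ g x (rotX x) = 0 := by
    rw [← integral_indicator hAm]
    have h1 := integral_T_eq_zero (lip_indicator (A := A) hgL fun x hx => (hfr x hx).eq_of_nhds)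
      (HasCompactSupport.mono hgcs (fun x hx => by
        simp only [Function.mem_support] at hx ⊢
        intro h
        apply hx
        by_cases hxA : x ∈ A <;> simp [hxA, h]))
    rw [← h1]
    congr 1
    funext x
    rw [fderiv_indicator hfr]
    by_cases hxA : x ∈ A <;> simp [hxA]
  have hAfin : volume A ≠ ⊤ := ((measure_mono hAsub).trans_lt measure_ball_lt_top).ne
  have : IsFiniteMeasure (volume.restrict A) := ⟨by simpa using hAfin.lt_top⟩
  set S1 : V2 → ℝ := fun x => ∑ i ∈ ι, (closedBall (c i) (2 * r i)).indicator
    (fun _ => (1:ℝ)) x with hS1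
  set S2 : V2 → ℝ := fun x => ∑ i ∈ ι, (closedBall (c i) (2 * r i)).indicator
    (fun _ => 1 / r i) x with hS2
  have hi : ∀ (i : ℕ) (s : ℝ), Integrable ((closedBall (c i) (2 * r i)).indicator
      (fun _ : V2 => s)) (volume.restrict A) := fun i s =>
    ((integrable_indicator_iff measurableSet_closedBall).2
      (integrableOn_const (measure_closedBall_lt_top.ne))).restrict
  have hS1i : Integrable S1 (volume.restrict A) := integrable_finsetSum _ fun i _ => hi i 1
  have hS2i : Integrable S2 (volume.restrict A) := integrable_finsetSum _ fun i _ => hi i _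
  have hFi : Integrable (fun x : V2 => β (‖x‖ ^ 2) * √(1 + 1 / ‖x‖ ^ 2))
      (volume.restrict A) := by
    refine Integrable.of_bound (etaF_measurable hβd.continuous).aestronglyMeasurable (1 + 1 / ε)
      (ae_of_all _ fun x => ?_)
    have := F_bound hβ hε (hβx x)
    rw [Real.norm_eq_abs, abs_of_nonneg this.1]
    exact this.2
  have hTi : Integrable (fun x => fderiv ℝ g x (rotX x)) (volume.restrict A) := by
    refine Integrable.of_bound (measurable_T g).aestronglyMeasurable (Cg * l)
      ((ae_restrict_iff' hAm).2 (ae_of_all _ fun x hx => ?_))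
    refine (norm_T_le hgL x).trans ?_
    have : ‖x‖ < l := by simpa using hAsub hx
    gcongr
  have hS1b : ∫ x in A, S1 x ≤ 4 * Real.pi * (lam * (m + 2)) := by
    rw [hS1, integral_finsetSum _ fun i _ => hi i 1]
    calc _ ≤ ∑ i ∈ ι, 4 * Real.pi * lam * r i := by
          refine Finset.sum_le_sum fun i hi => ?_
          have h := hr i hi
          refine (ball_int (c i) h.1 1 zero_le_one).trans ?_
          have hp := Real.pi_pos
          have : r i ^ 2 ≤ lam * r i := by nlinarith
          nlinarith
      _ = 4 * Real.pi * lam * ∑ i ∈ ι, r i := by rw [Finset.mul_sum]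
      _ ≤ 4 * Real.pi * lam * (m + 2) := by gcongr
      _ = _ := by ring
  have hS2b : ∫ x in A, S2 x ≤ 4 * Real.pi * (m + 2) := by
    rw [hS2, integral_finsetSum _ fun i _ => hi i _]
    calc _ ≤ ∑ i ∈ ι, 4 * Real.pi * r i := by
          refine Finset.sum_le_sum fun i hi => ?_
          have h := hr i hi
          refine (ball_int (c i) h.1 (1 / r i) (by have := h.1; positivity)).trans (le_of_eq ?_)
          have := h.1.ne'
          field_simp
      _ = 4 * Real.pi * ∑ i ∈ ι, r i := by rw [Finset.mul_sum]
      _ ≤ 4 * Real.pi * (m + 2) := by gcongr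
  have hcb : ∫ _x in A, lam / ε ≤ lam / ε * volume.real (ball (0 : V2) l) := by
    rw [setIntegral_const, smul_eq_mul, mul_comm]
    have : volume.real A ≤ volume.real (ball (0 : V2) l) :=
      measureReal_mono hAsub measure_ball_lt_top.ne
    gcongr
  have hEi : Integrable (fun x => (1 + 1 / ε) * S1 x + (lam / ε * l) * S2 x + lam / ε)
      (volume.restrict A) :=
    ((hS1i.const_mul _).add (hS2i.const_mul _)).add (integrable_const _)
  have hRi : Integrable (fun x => β (‖x‖ ^ 2) * √(1 + 1 / ‖x‖ ^ 2) + fderiv ℝ g x (rotX x)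
      - ((1 + 1 / ε) * S1 x + (lam / ε * l) * S2 x + lam / ε)) (volume.restrict A) :=
    (hFi.add hTi).sub hEi
  have hpt : ∀ᵐ x ∂(volume.restrict A), β (‖x‖ ^ 2) * √(1 + 1 / ‖x‖ ^ 2)
      + fderiv ℝ g x (rotX x) - ((1 + 1 / ε) * S1 x + (lam / ε * l) * S2 x + lam / ε)
      ≤ areaIntegrand w x := by
    rw [ae_restrict_iff' hAm]
    have hx0 : ∀ᵐ x : V2, x ≠ 0 := by simp [ae_iff]
    filter_upwards [hx0, hψd, hw.ae_differentiableAt, hψL.ae_differentiableAt] with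
      x hx0 hψd hwd hψdf hxA
    have hxl : ‖x‖ < l := by simpa using hAsub hxA
    have hwx : ‖w x - vortex x‖ ≤ lam := by
      rw [hA] at hxA
      by_contra h
      exact hxA.2 ⟨⟨hxA.1, hx0⟩, not_le.1 h⟩
    obtain ⟨hk1, hk2⟩ := key_pointwise hβ hε hlam w hx0 (hβx x) hwx
    obtain ⟨L, hL1, hL2⟩ := radial_T (Hw_contDiff hβd ha0 hs) x
    obtain ⟨hPd, hPT⟩ := P_T hwd hL1 hL2
    rw [← hPT] at hk1
    have hgT : fderiv ℝ g x (rotX x) =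
        P x * fderiv ℝ ψ x (rotX x) + ψ x * fderiv ℝ P x (rotX x) := by
      have := (hPd.hasFDerivAt.mul hψdf.hasFDerivAt).fderiv
      change fderiv ℝ g x = _ at this
      rw [this]
      simp [P]
    have hF := F_bound hβ hε (hβx x)
    have har : 0 ≤ areaIntegrand w x := Real.sqrt_nonneg _
    have h1 := hψ0 x
    have h2 := hψ1 x
    have h3 := hψs x
    have h4 := hψd (rotX x)
    rw [norm_rotX] at h4
    have hS20 : 0 ≤ S2 x := Finset.sum_nonneg fun i hi =>
      Set.indicator_nonneg (fun _ _ => by have := (hr i hi).1; positivity) x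
    have h5 : |P x * fderiv ℝ ψ x (rotX x)| ≤ lam / ε * l * S2 x := by
      rw [abs_mul]
      calc _ ≤ lam / ε * (S2 x * ‖x‖) := by gcongr
        _ ≤ lam / ε * (S2 x * l) := by gcongr
        _ = _ := by ring
    have h6 := (abs_le.1 h5).2
    have hle : 0 ≤ lam / ε := by positivity
    change β (‖x‖ ^ 2) * √(1 + 1 / ‖x‖ ^ 2) + fderiv ℝ P x (rotX x) - lam / ε ≤ _ at hk1
    have h7 := mul_le_mul_of_nonneg_left hk1 h1
    have h8 : ψ x * (β (‖x‖ ^ 2) * areaIntegrand w x) ≤ areaIntegrand w x := by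
      have : ψ x * β (‖x‖ ^ 2) ≤ 1 := mul_le_one₀ h2 (hβ _).1 (hβ _).2
      rw [← mul_assoc]
      exact mul_le_of_le_one_left har this
    have h9 : (1 - ψ x) * (β (‖x‖ ^ 2) * √(1 + 1 / ‖x‖ ^ 2)) ≤ (1 + 1 / ε) * S1 x := by
      have e1 : 0 ≤ 1 - ψ x := by linarith
      have e2 : (0:ℝ) ≤ 1 + 1 / ε := by positivity
      calc _ ≤ (1 - ψ x) * (1 + 1 / ε) := by gcongr; exact hF.2
        _ ≤ S1 x * (1 + 1 / ε) := by gcongr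
        _ = _ := by ring
    have h10 : ψ x * (lam / ε) ≤ lam / ε := mul_le_of_le_one_left hle h2
    rw [hgT]
    rw [mul_sub, mul_add] at h7
    rw [sub_mul, one_mul] at h9
    linarith
  refine le_trans (ENNReal.ofReal_le_ofReal ?_) (ofReal_integral_le hRi hpt)
  rw [integral_sub (f := fun x : V2 => β (‖x‖ ^ 2) * √(1 + 1 / ‖x‖ ^ 2) + fderiv ℝ g x (rotX x))
      (hFi.add hTi) hEi, integral_add hFi hTi, hTg,
    integral_add (f := fun x => (1 + 1 / ε) * S1 x + (lam / ε * l) * S2 x)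
      ((hS1i.const_mul _).add (hS2i.const_mul _)) (integrable_const _),
    integral_add (hS1i.const_mul _) (hS2i.const_mul _), integral_const_mul, integral_const_mul]
  have e1 : (1 + 1 / ε) * ∫ x in A, S1 x ≤ (1 + 1 / ε) * (4 * Real.pi * (lam * (m + 2))) := by
    gcongr
  have e2 : (lam / ε * l) * ∫ x in A, S2 x ≤ (lam / ε * l) * (4 * Real.pi * (m + 2)) := by
    gcongr
  linarith

lemma liminf_beta (l : ℝ) (hl : 0 < l) (n : ℕ)
    (u : ℕ → V2 → V2) (K : ℕ → ℝ≥0)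
    (hLip : ∀ k, LipschitzOnWith (K k) (u k) (ball (0 : V2) l))
    (lam : ℕ → ℝ) (hmem : ∀ k, lam k ∈ Set.Ioo (0 : ℝ) 2)
    (hlam0 : Tendsto lam atTop (𝓝 0))
    (hH : ∀ k, μH[1] {x : V2 | x ∈ ball (0 : V2) l \ {0} ∧ ‖u k x - vortex x‖ = lam k} < ⊤)
    (hHlim : Tendsto (fun k => ENNReal.ofReal (lam k) *
        μH[1] {x : V2 | x ∈ ball (0 : V2) l \ {0} ∧ ‖u k x - vortex x‖ = lam k})
      atTop (𝓝 0))
    (D : ℕ → Set V2)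
    (hD : ∀ k, D k = {x : V2 | x ∈ ball (0 : V2) l \ {0} ∧ lam k < ‖u k x - vortex x‖})
    (ζ : V2 → ℝ) (hζmeas : Measurable ζ) (hζmem : ∀ x, ζ x ∈ Set.Icc (0 : ℝ) 1)
    (hζint : ∫ x in ball (0 : V2) l, ζ x ≤ 1 / (n : ℝ))
    (hconv : ∀ g : V2 → ℝ, Integrable g (volume.restrict (ball (0 : V2) l)) →
      Tendsto (fun k => ∫ x in D k, g x) atTop (𝓝 (∫ x in ball (0 : V2) l, ζ x * g x)))
    (ε : ℝ) (hε : ε ∈ Set.Ioo 0 l) {β : ℝ → ℝ} (hβd : ContDiff ℝ 1 β)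
    (hβ : ∀ t, 0 ≤ β t ∧ β t ≤ 1) {a b : ℝ} (ha : ε ^ 2 < a) (hb : b < l ^ 2)
    (hs : ∀ t, t ∉ Set.Icc a b → β t = 0) :
    ENNReal.ofReal
        ((∫ x in ball (0 : V2) l, β (‖x‖ ^ 2) * √(1 + 1 / ‖x‖ ^ 2))
          - (1 + 1 / ε) * (1 / (n : ℝ)))
      ≤ Filter.liminf
          (fun k => ∫⁻ x in ball (0 : V2) l \ D k, ENNReal.ofReal (areaIntegrand (u k) x))
          atTop := by
  have hε0 := hε.1
  have hβx : ∀ x : V2, β (‖x‖ ^ 2) ≠ 0 → ε ≤ ‖x‖ := by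
    intro x hx
    have h1 : ‖x‖ ^ 2 ∈ Set.Icc a b := by
      by_contra h
      exact hx (hs _ h)
    exact le_of_lt (lt_of_pow_lt_pow_left₀ 2 (norm_nonneg _) (by linarith [h1.1]))
  have : IsFiniteMeasure (volume.restrict (ball (0 : V2) l)) :=
    ⟨by rw [Measure.restrict_apply_univ]; exact measure_ball_lt_top⟩
  set F : V2 → ℝ := fun x => β (‖x‖ ^ 2) * √(1 + 1 / ‖x‖ ^ 2) with hF
  have hFb : ∀ x, 0 ≤ F x ∧ F x ≤ 1 + 1 / ε := fun x => F_bound hβ hε0 (hβx x)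
  have hFi : Integrable F (volume.restrict (ball (0 : V2) l)) := by
    refine Integrable.of_bound (etaF_measurable hβd.continuous).aestronglyMeasurable (1 + 1 / ε)
      (ae_of_all _ fun x => ?_)
    rw [Real.norm_eq_abs, abs_of_nonneg (hFb x).1]
    exact (hFb x).2
  set m : ℕ → ℝ := fun k => (μH[1] {x : V2 | x ∈ ball (0 : V2) l \ {0} ∧
      ‖u k x - vortex x‖ = lam k}).toReal with hm
  set V := volume.real (ball (0 : V2) l) with hV
  have hbound : ∀ k, ENNReal.ofReal ((∫ x in ball (0 : V2) l, F x) - (∫ x in D k, F x) -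
      ((1 + 1 / ε) * (4 * Real.pi * (lam k * (m k + 2))) +
        (lam k / ε * l) * (4 * Real.pi * (m k + 2)) + lam k / ε * V))
      ≤ ∫⁻ x in ball (0 : V2) l \ D k, ENNReal.ofReal (areaIntegrand (u k) x) := by
    intro k
    obtain ⟨w, hwL, hwe⟩ := (hLip k).extend_finite_dimension
    have hSeq : {x : V2 | x ∈ ball (0 : V2) l \ {0} ∧ ‖u k x - vortex x‖ = lam k} =
        {x : V2 | x ∈ ball (0 : V2) l \ {0} ∧ ‖w x - vortex x‖ = lam k} := by
      ext x
      refine and_congr_right fun hx => ?_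
      rw [hwe hx.1]
    have hDeq : D k = {x : V2 | x ∈ ball (0 : V2) l \ {0} ∧ lam k < ‖w x - vortex x‖} := by
      rw [hD]
      ext x
      refine and_congr_right fun hx => ?_
      rw [hwe hx.1]
    have hDsub : D k ⊆ ball (0 : V2) l := by
      rw [hDeq]; exact fun x hx => hx.1.1
    have hAm : MeasurableSet (ball (0 : V2) l \ D k) := by
      rw [hDeq]; exact measA hwL.continuous
    have hDm : MeasurableSet (D k) := by
      have := (measurableSet_ball (x := (0 : V2)) (ε := l)).diff hAm
      rwa [Set.sdiff_sdiff_cancel_left hDsub] at this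
    have hfb := fixed_bound hβd hβ hε0 hl ha hb hs hwL (hmem k).1 (hSeq ▸ hH k)
      (m := m k) (by rw [← hSeq]) (A := ball (0 : V2) l \ D k) (by rw [hDeq])
    rw [setIntegral_sdiff hDm hFi hDsub] at hfb
    refine hfb.trans (le_of_eq ?_)
    refine setLIntegral_congr_fun hAm fun x hx => ?_
    have : w =ᶠ[𝓝 x] u k := by
      filter_upwards [isOpen_ball.mem_nhds hx.1] with y hy
      exact (hwe hy).symm
    simp only [areaIntegrand, this.fderiv_eq]
  have hlm : Tendsto (fun k => lam k * m k) atTop (𝓝 0) := by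
    have := (ENNReal.tendsto_toReal ENNReal.zero_ne_top).comp hHlim
    simp only [ENNReal.toReal_zero] at this
    refine this.congr fun k => ?_
    simp [m, ENNReal.toReal_mul, ENNReal.toReal_ofReal (hmem k).1.le]
  have hlim : Tendsto (fun k => (∫ x in ball (0 : V2) l, F x) - (∫ x in D k, F x) -
      ((1 + 1 / ε) * (4 * Real.pi * (lam k * (m k + 2))) +
        (lam k / ε * l) * (4 * Real.pi * (m k + 2)) + lam k / ε * V)) atTop
      (𝓝 ((∫ x in ball (0 : V2) l, F x) - (∫ x in ball (0 : V2) l, ζ x * F x))) := by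
    have h1 : Tendsto (fun k => (1 + 1 / ε) * (4 * Real.pi * (lam k * m k + 2 * lam k)) +
        (1 / ε * l * (4 * Real.pi)) * (lam k * m k + 2 * lam k) + lam k * (1 / ε * V)) atTop
        (𝓝 ((1 + 1 / ε) * (4 * Real.pi * (0 + 2 * 0)) +
        (1 / ε * l * (4 * Real.pi)) * (0 + 2 * 0) + 0 * (1 / ε * V))) := by
      have h2 := hlm.add (hlam0.const_mul 2)
      exact (((h2.const_mul _).const_mul _).add (h2.const_mul _)).add (hlam0.mul_const _)
    have h3 := ((hconv F hFi).const_sub (∫ x in ball (0 : V2) l, F x)).sub h1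
    convert h3 using 2
    · ring
    · ring
  have hζF : ∫ x in ball (0 : V2) l, ζ x * F x ≤ (1 + 1 / ε) * (1 / (n : ℝ)) := by
    have hζi : Integrable ζ (volume.restrict (ball (0 : V2) l)) := by
      refine Integrable.of_bound hζmeas.aestronglyMeasurable 1 (ae_of_all _ fun x => ?_)
      rw [Real.norm_eq_abs, abs_of_nonneg (hζmem x).1]
      exact (hζmem x).2
    calc ∫ x in ball (0 : V2) l, ζ x * F x ≤ ∫ x in ball (0 : V2) l, (1 + 1 / ε) * ζ x := by
          refine integral_mono_of_nonneg
            (ae_of_all _ fun x => mul_nonneg (hζmem x).1 (hFb x).1) (hζi.const_mul _)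
            (ae_of_all _ fun x => ?_)
          have := mul_le_mul_of_nonneg_left (hFb x).2 (hζmem x).1
          simp only
          linarith
      _ = (1 + 1 / ε) * ∫ x in ball (0 : V2) l, ζ x := integral_const_mul _ _
      _ ≤ _ := by gcongr
  calc _ ≤ ENNReal.ofReal ((∫ x in ball (0 : V2) l, F x) -
        (∫ x in ball (0 : V2) l, ζ x * F x)) := ENNReal.ofReal_le_ofReal (by linarith)
    _ = _ := ((ENNReal.continuous_ofReal.tendsto _).comp hlim).liminf_eq.symm
    _ ≤ _ := liminf_le_liminf (Eventually.of_forall hbound)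

lemma bump_exists {p q : ℝ} (hpq : p < q) : ∃ β : ℕ → ℝ → ℝ, ∃ a b : ℕ → ℝ,
    (∀ j, ContDiff ℝ 1 (β j)) ∧ (∀ j t, 0 ≤ β j t ∧ β j t ≤ 1) ∧ (∀ j, p < a j) ∧
    (∀ j, b j < q) ∧ (∀ j t, t ∉ Set.Icc (a j) (b j) → β j t = 0) ∧
    ∀ t, p < t → t < q → Tendsto (fun j => β j t) atTop (𝓝 1) := by
  set R := (q - p) / 2 with hR
  have hR0 : 0 < R := by rw [hR]; linarith
  have hc : ∀ j : ℕ, (0:ℝ) < 1 / ((j:ℝ) + 2) ∧ 1 / ((j:ℝ) + 2) ≤ 1 / 2 := by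
    intro j
    constructor
    · positivity
    · apply one_div_le_one_div_of_le two_pos; linarith [Nat.cast_nonneg (α := ℝ) j]
  let f : ∀ j : ℕ, ContDiffBump ((p + q) / 2) := fun j =>
    { rIn := R * (1 - 1 / ((j:ℝ) + 2))
      rOut := R * (1 - 1 / ((j:ℝ) + 2) / 2)
      rIn_pos := mul_pos hR0 (by linarith [hc j])
      rIn_lt_rOut := mul_lt_mul_of_pos_left (by linarith [hc j]) hR0 }
  have hout : ∀ j, (f j).rOut < R := fun j => by
    have := mul_pos hR0 (hc j).1
    change R * (1 - 1 / ((j:ℝ) + 2) / 2) < R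
    linarith
  refine ⟨fun j => f j, fun j => (p + q) / 2 - (f j).rOut, fun j => (p + q) / 2 + (f j).rOut,
    fun j => (f j).contDiff, fun j t => ⟨(f j).nonneg, (f j).le_one⟩, fun j => ?_, fun j => ?_,
    fun j t ht => ?_, fun t h1 h2 => ?_⟩
  · have := hout j; simp only; linarith
  · have := hout j; simp only; linarith
  · apply (f j).zero_of_le_dist
    by_contra h
    rw [not_le, Real.dist_eq, abs_lt] at h
    exact ht ⟨by linarith, by linarith⟩
  · have hlt : dist t ((p + q) / 2) < R := by
      rw [Real.dist_eq, abs_lt]; constructor <;> linarith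
    have hlim : Tendsto (fun j : ℕ => R * (1 - 1 / ((j:ℝ) + 2))) atTop (𝓝 (R * (1 - 0))) := by
      refine (Tendsto.const_sub _ ?_).const_mul _
      have := (tendsto_one_div_add_atTop_nhds_zero_nat (𝕜 := ℝ)).comp (tendsto_add_atTop_nat 1)
      refine this.congr fun j => ?_
      simp only [Function.comp, Nat.cast_add, Nat.cast_one]
      ring
    rw [sub_zero, mul_one] at hlim
    refine tendsto_const_nhds.congr' ?_
    filter_upwards [hlim.eventually_const_lt hlt] with j hj
    exact ((f j).one_of_mem_closedBall (mem_closedBall.2 hj.le)).symm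

/-- Estimate from below of the graph area of `u_k` over `B_l \ D_k`:
given the choice of levels `λ_k` and the weak-* limit density `ζ` of the bad sets `D_k`,
for every `ε ∈ (0, l)` the liminf of the areas of the graphs of `u_k` over `B_l \ D_k`
is at least `∫_{B_l \ closure(B_ε)} √(1 + |∇u|²) dx − 1/n − 2/(εn)`. -/
theorem liminf_area_on_good_set_ge (l : ℝ) (hl : 0 < l) (n : ℕ) (hn : 1 ≤ n)
    (u : ℕ → V2 → V2) (K : ℕ → ℝ≥0)
    (hLip : ∀ k, LipschitzOnWith (K k) (u k) (ball (0 : V2) l))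
    (hval : ∀ k, ∀ x ∈ ball (0 : V2) l, ‖u k x‖ ≤ 1)
    (hgrad : (⨆ k, ∫⁻ x in ball (0 : V2) l,
        ENNReal.ofReal (Real.sqrt (frobSq (fderiv ℝ (u k) x)))) < ⊤)
    (lam : ℕ → ℝ) (hanti : StrictAnti lam) (hmem : ∀ k, lam k ∈ Set.Ioo (0 : ℝ) 2)
    (hlam0 : Tendsto lam atTop (𝓝 0))
    (hH : ∀ k, μH[1] {x : V2 | x ∈ ball (0 : V2) l \ {0} ∧ ‖u k x - vortex x‖ = lam k} < ⊤)
    (hHlim : Tendsto (fun k => ENNReal.ofReal (lam k) *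
        μH[1] {x : V2 | x ∈ ball (0 : V2) l \ {0} ∧ ‖u k x - vortex x‖ = lam k})
      atTop (𝓝 0))
    (D : ℕ → Set V2)
    (hD : ∀ k, D k = {x : V2 | x ∈ ball (0 : V2) l \ {0} ∧ lam k < ‖u k x - vortex x‖})
    (ζ : V2 → ℝ) (hζmeas : Measurable ζ) (hζmem : ∀ x, ζ x ∈ Set.Icc (0 : ℝ) 1)
    (hζint : ∫ x in ball (0 : V2) l, ζ x ≤ 1 / (n : ℝ))
    (hconv : ∀ g : V2 → ℝ, Integrable g (volume.restrict (ball (0 : V2) l)) →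
      Tendsto (fun k => ∫ x in D k, g x) atTop (𝓝 (∫ x in ball (0 : V2) l, ζ x * g x)))
    (ε : ℝ) (hε : ε ∈ Set.Ioo 0 l) :
    ENNReal.ofReal
        ((∫ x in ball (0 : V2) l \ closedBall (0 : V2) ε,
            Real.sqrt (1 + frobSq (fderiv ℝ vortex x))) - 1 / (n : ℝ) - 2 / (ε * (n : ℝ)))
      ≤ Filter.liminf
          (fun k => ∫⁻ x in ball (0 : V2) l \ D k, ENNReal.ofReal (areaIntegrand (u k) x))
          atTop := by
  have hε0 := hε.1
  obtain ⟨β, a, b, hβd, hβ, ha, hb, hs, hβlim⟩ :=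
    bump_exists (p := ε ^ 2) (q := l ^ 2) (by have := hε.2; gcongr)
  have key := fun j => liminf_beta l hl n u K hLip lam hmem hlam0 hH hHlim D hD ζ hζmeas hζmem
    hζint hconv ε hε (hβd j) (hβ j) (ha j) (hb j) (hs j)
  have hβx : ∀ j, ∀ x : V2, β j (‖x‖ ^ 2) ≠ 0 → ε < ‖x‖ := by
    intro j x hx
    have h1 : ‖x‖ ^ 2 ∈ Set.Icc (a j) (b j) := by
      by_contra h
      exact hx (hs j _ h)
    exact lt_of_pow_lt_pow_left₀ 2 (norm_nonneg _) (by linarith [h1.1, ha j])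
  have hfin : IsFiniteMeasure (volume.restrict (ball (0 : V2) l \ closedBall (0 : V2) ε)) :=
    ⟨by rw [Measure.restrict_apply_univ]; exact (measure_mono Set.sdiff_subset).trans_lt measure_ball_lt_top⟩
  have hm : MeasurableSet (ball (0 : V2) l \ closedBall (0 : V2) ε) :=
    measurableSet_ball.diff measurableSet_closedBall
  have hlim : Tendsto (fun j => ∫ x in ball (0 : V2) l, β j (‖x‖ ^ 2) * √(1 + 1 / ‖x‖ ^ 2))
      atTop (𝓝 (∫ x in ball (0 : V2) l \ closedBall (0 : V2) ε,
        √(1 + frobSq (fderiv ℝ vortex x)))) := by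
    have heq : ∀ j, ∫ x in ball (0 : V2) l, β j (‖x‖ ^ 2) * √(1 + 1 / ‖x‖ ^ 2) =
        ∫ x in ball (0 : V2) l \ closedBall (0 : V2) ε, β j (‖x‖ ^ 2) * √(1 + 1 / ‖x‖ ^ 2) := by
      intro j
      apply setIntegral_eq_of_subset_of_forall_sdiff_eq_zero measurableSet_ball Set.sdiff_subset
      intro x hx
      by_contra h
      have h1 := hβx j x (left_ne_zero_of_mul h)
      exact hx.2 ⟨hx.1, by simpa using h1⟩
    simp_rw [heq]
    refine tendsto_integral_of_dominated_convergence (fun _ => 1 + 1 / ε)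
      (fun j => (etaF_measurable (hβd j).continuous).aestronglyMeasurable)
      (integrable_const _) (fun j => ae_of_all _ fun x => ?_)
      ((ae_restrict_iff' hm).2 (ae_of_all _ fun x hx => ?_))
    · have := F_bound (hβ j) hε0 fun h => (hβx j x h).le
      rw [Real.norm_eq_abs, abs_of_nonneg this.1]
      exact this.2
    · have h1 : ‖x‖ < l := by simpa using hx.1
      have h2 : ε < ‖x‖ := by simpa using hx.2
      have hx0 : x ≠ 0 := norm_pos_iff.1 (hε0.trans h2)
      rw [vortex_frob x hx0]
      have := (hβlim (‖x‖ ^ 2) (by gcongr) (by gcongr)).mul_const (√(1 + 1 / ‖x‖ ^ 2))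
      rwa [one_mul] at this
  have hfinal := le_of_tendsto' ((ENNReal.continuous_ofReal.tendsto _).comp
    (hlim.sub_const ((1 + 1 / ε) * (1 / (n : ℝ))))) key
  refine (ENNReal.ofReal_le_ofReal ?_).trans hfinal
  have hn0 : (0 : ℝ) < n := by exact_mod_cast hn
  have e1 : 2 / (ε * (n : ℝ)) = 2 * (1 / ε * (1 / (n : ℝ))) := by field_simp
  have e2 : 0 < 1 / ε * (1 / (n : ℝ)) := by positivity
  rw [e1]
  linarith
end
end

section
/- Let l > 0 and let u be the vortex map on B_l. Let (u_k) be Lipschitz maps from B_l into the closed unit disc of ℝ² with sup_k ∫_{B_l} |∇u_k| dx < ∞. Let (λ_k) ⊂ (0, 2) be strictly decreasing with λ_k → 0, ℋ¹({x ∈ B_l \ {0} : |u_k(x) − u(x)| = λ_k}) < ∞ for every k, and λ_k · ℋ¹({x ∈ B_l \ {0} : |u_k(x) − u(x)| = λ_k}) → 0. Set D_k := {x ∈ B_l \ {0} : |u_k(x) − u(x)| > λ_k}, and let ζ : B_l → [0, 1] be measurable with ∫_{D_k} g dx → ∫_{B_l} ζ g dx for every g ∈ L¹(B_l). Then for every smooth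 compactly supported φ : B_l × ℝ² → ℝ: (a) ∫_{B_l \ D_k} φ(x, u_k(x)) dx → ∫_{B_l} φ(x, u(x)) (1 − ζ(x)) dx; and (b) for all i, j ∈ {1, 2}, ∫_{B_l \ D_k} φ(x, u_k(x)) ∂_i (u_k)_j(x) dx → ∫_{B_l} φ(x, u(x)) ∂_i u_j(x) (1 − ζ(x)) dx, where ∂_i (u_k)_j are the a.e.-defined partial derivatives. -/
open MeasureTheory Filter Metric Topology
open scoped ENNReal NNReal

noncomputable section

theorem oneD_aux (h q : ℝ → ℝ) (C c : ℝ) (hC : 0 ≤ C) (n : ℕ) : ∀ (a b : ℝ) (F : Finset ℝ),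
    F.card = n → (∀ t ∈ Set.Ioo a b, q t = c → t ∈ F) → (∀ t ∈ F, t ∈ Set.Ioo a b) →
    a ≤ b → AbsolutelyContinuousOnInterval h a b → ContinuousOn q (Set.Icc a b) →
    (∀ t ∈ Set.Ioo a b, q t ≤ c → |h t| ≤ C) →
    |∫ t in Set.Ioo a b ∩ {t | q t ≤ c}, deriv h t| ≤ 2 * C * (n + 1) := by
  induction n using Nat.strong_induction_on with
  | _ n ih =>
  intro a b F hFn hF hF' hab hac hq hb
  rcases Finset.eq_empty_or_nonempty F with hFe | ⟨d, hd⟩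
  · subst hFe
    have hn : (n : ℝ) = 0 := by simp [← hFn]
    rw [hn]
    rcases hab.eq_or_lt with rfl | hab'
    · simp; positivity
    have hne : ∀ t ∈ Set.Ioo a b, q t ≠ c := fun t ht hqt => by simpa using hF t ht hqt
    have hqo : ContinuousOn q (Set.Ioo a b) := hq.mono Set.Ioo_subset_Icc_self
    by_cases hex : ∃ t0 ∈ Set.Ioo a b, q t0 ≤ c
    · obtain ⟨t0, ht0, hqt0⟩ := hex
      have hall : ∀ t ∈ Set.Ioo a b, q t ≤ c := by
        intro t ht
        by_contra hcon
        push Not at hcon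
        obtain ⟨s, hs, hsc⟩ := isPreconnected_Ioo.intermediate_value ht0 ht hqo
          (⟨hqt0, hcon.le⟩ : c ∈ Set.Icc (q t0) (q t))
        exact hne s hs hsc
      have hset : Set.Ioo a b ∩ {t | q t ≤ c} = Set.Ioo a b := by
        ext t; constructor
        · exact fun h => h.1
        · exact fun h => ⟨h, hall t h⟩
      rw [hset, ← integral_Ioc_eq_integral_Ioo, ← intervalIntegral.integral_of_le hab,
        hac.integral_deriv_eq_sub]
      have hhc : ContinuousOn h (Set.Icc a b) := by
        have := hac.continuousOn
        rwa [Set.uIcc_of_le hab] at this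
      have hcl : ∀ t ∈ Set.Icc a b, |h t| ≤ C := by
        intro t ht
        have h1 : ContinuousOn (fun t => |h t|) (closure (Set.Ioo a b)) := by
          rw [closure_Ioo hab'.ne]; exact hhc.abs
        have := closure_Ioo hab'.ne
        refine le_on_closure (f := fun t => |h t|) (g := fun _ => C) (s := Set.Ioo a b)
          (fun s hs => hb s hs (hall s hs)) h1 continuousOn_const ?_
        rw [this]; exact ht
      have h1 := hcl a ⟨le_rfl, hab⟩
      have h2 := hcl b ⟨hab, le_rfl⟩
      have := abs_sub (h b) (h a)
      linarith
    · push Not at hex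
      have hset : Set.Ioo a b ∩ {t | q t ≤ c} = ∅ := by
        ext t
        simp only [Set.mem_inter_iff, Set.mem_setOf_eq, Set.mem_empty_iff_false, iff_false, not_and,
          not_le]
        exact hex t
      rw [hset]; simp; positivity
  · have hdab := hF' d hd
    set F1 := F.filter (fun t => t < d) with hF1
    set F2 := F.filter (fun t => d < t) with hF2
    have hcard : F1.card + F2.card + 1 = n := by
      have h1 := Finset.card_filter_add_card_filter_not (s := F) (fun t => t < d)
      have h2 : F.filter (fun t => ¬ t < d) = insert d F2 := by
        ext t
        simp only [hF2, Finset.mem_filter, Finset.mem_insert, not_lt]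
        constructor
        · rintro ⟨h1, h2⟩
          rcases h2.eq_or_lt with h | h
          · exact Or.inl h.symm
          · exact Or.inr ⟨h1, h⟩
        · rintro (rfl | h)
          · exact ⟨hd, le_rfl⟩
          · exact ⟨h.1, h.2.le⟩
      rw [h2, Finset.card_insert_of_notMem (by simp [hF2]), hFn] at h1
      omega
    have e1 := ih F1.card (by omega) a d F1 rfl
      (fun t ht hqt => Finset.mem_filter.2 ⟨hF t ⟨ht.1, ht.2.trans hdab.2⟩ hqt, ht.2⟩)
      (fun t ht => ⟨(hF' t (Finset.mem_filter.1 ht).1).1, (Finset.mem_filter.1 ht).2⟩)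
      hdab.1.le (hac.mono (by
        rw [Set.uIcc_of_le hab, Set.uIcc_of_le hdab.1.le]; exact Set.Icc_subset_Icc le_rfl hdab.2.le))
      (hq.mono (Set.Icc_subset_Icc le_rfl hdab.2.le))
      (fun t ht => hb t ⟨ht.1, ht.2.trans hdab.2⟩)
    have e2 := ih F2.card (by omega) d b F2 rfl
      (fun t ht hqt => Finset.mem_filter.2 ⟨hF t ⟨hdab.1.trans ht.1, ht.2⟩ hqt, ht.1⟩)
      (fun t ht => ⟨(Finset.mem_filter.1 ht).2, (hF' t (Finset.mem_filter.1 ht).1).2⟩)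
      hdab.2.le (hac.mono (by
        rw [Set.uIcc_of_le hab, Set.uIcc_of_le hdab.2.le]; exact Set.Icc_subset_Icc hdab.1.le le_rfl))
      (hq.mono (Set.Icc_subset_Icc hdab.1.le le_rfl))
      (fun t ht => hb t ⟨hdab.1.trans ht.1, ht.2⟩)
    have hgInt : IntegrableOn (deriv h) (Set.Ioc a b) :=
      (intervalIntegrable_iff_integrableOn_Ioc_of_le hab).1 hac.intervalIntegrable_deriv
    have hmeas2 : MeasurableSet (Set.Ioo d b ∩ {t | q t ≤ c}) := by
      have hqo : ContinuousOn q (Set.Ioo d b) := hq.mono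
        (fun t ht => ⟨(hdab.1.trans ht.1).le, ht.2.le⟩)
      have : Set.Ioo d b ∩ {t | q t ≤ c} = Set.Ioo d b \ (Set.Ioo d b ∩ q ⁻¹' (Set.Ioi c)) := by
        ext t
        simp only [Set.mem_inter_iff, Set.mem_setOf_eq, Set.mem_diff, Set.mem_preimage, Set.mem_Ioi,
          not_and, not_lt]
        tauto
      rw [this]
      exact measurableSet_Ioo.diff (hqo.isOpen_inter_preimage isOpen_Ioo isOpen_Ioi).measurableSet
    have hsplit : ∫ t in Set.Ioo a b ∩ {t | q t ≤ c}, deriv h t =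
        (∫ t in Set.Ioo a d ∩ {t | q t ≤ c}, deriv h t) +
        ∫ t in Set.Ioo d b ∩ {t | q t ≤ c}, deriv h t := by
      rw [← setIntegral_union _ hmeas2]
      · apply setIntegral_congr_set
        have hnd : ∀ᵐ t : ℝ, t ≠ d := by
          simp [ae_iff, measure_singleton]
        filter_upwards [hnd] with t ht
        apply propext
        change (t ∈ Set.Ioo a b ∩ {t | q t ≤ c}) ↔
          (t ∈ Set.Ioo a d ∩ {t | q t ≤ c} ∪ Set.Ioo d b ∩ {t | q t ≤ c})
        simp only [Set.mem_inter_iff, Set.mem_union, Set.mem_Ioo, Set.mem_setOf_eq]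
        constructor
        · rintro ⟨⟨h1, h2⟩, h3⟩
          rcases lt_or_gt_of_ne ht with h | h
          · exact Or.inl ⟨⟨h1, h⟩, h3⟩
          · exact Or.inr ⟨⟨h, h2⟩, h3⟩
        · rintro (⟨⟨h1, h2⟩, h3⟩ | ⟨⟨h1, h2⟩, h3⟩)
          · exact ⟨⟨h1, h2.trans hdab.2⟩, h3⟩
          · exact ⟨⟨hdab.1.trans h1, h2⟩, h3⟩
      · exact hgInt.mono_set (fun t ht => ⟨ht.1.1, (ht.1.2.trans hdab.2).le⟩)
      · exact hgInt.mono_set (fun t ht => ⟨hdab.1.trans ht.1.1, ht.1.2.le⟩)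
      · rw [Set.disjoint_left]
        rintro t ⟨h1, _⟩ ⟨h2, _⟩
        exact absurd h1.2 (not_lt.2 h2.1.le)
    rw [hsplit]
    have hcr : (n : ℝ) = F1.card + F2.card + 1 := by rw [← hcard]; push_cast; ring
    calc _ ≤ _ := abs_add_le _ _
      _ ≤ 2 * C * (F1.card + 1) + 2 * C * (F2.card + 1) := add_le_add e1 e2
      _ = _ := by rw [hcr]; ring

def PP (i : Fin 2) (p : ℝ × ℝ) : V2 := if i = 0 then !₂[p.2, p.1] else !₂[p.1, p.2]

theorem PP_i (i : Fin 2) (p : ℝ × ℝ) : PP i p i = p.2 := by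
  fin_cases i <;> simp [PP]

theorem PP_other (i : Fin 2) (p : ℝ × ℝ) : PP i p (1 - i) = p.1 := by
  fin_cases i <;> simp [PP]

theorem PP_mp (i : Fin 2) : MeasurePreserving (PP i) ∧ MeasurableEmbedding (PP i) := by
  have h1 : MeasurePreserving (fun p : ℝ × ℝ => (!₂[p.1, p.2] : V2)) ∧
      MeasurableEmbedding (fun p : ℝ × ℝ => (!₂[p.1, p.2] : V2)) := by
    constructor
    · exact (PiLp.volume_preserving_toLp (Fin 2)).comp
        (volume_preserving_finTwoArrow ℝ).symm
    · exact (MeasurableEquiv.toLp 2 (Fin 2 → ℝ)).measurableEmbedding.comp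
        (MeasurableEquiv.finTwoArrow (α := ℝ)).symm.measurableEmbedding
  have h2 : MeasurePreserving (Prod.swap : ℝ × ℝ → ℝ × ℝ) := Measure.measurePreserving_swap
  fin_cases i
  · exact ⟨h1.1.comp h2, h1.2.comp (MeasurableEquiv.prodComm (α := ℝ) (β := ℝ)).measurableEmbedding⟩
  · exact h1

theorem PP_norm (i : Fin 2) (p : ℝ × ℝ) : ‖PP i p‖ ^ 2 = p.1 ^ 2 + p.2 ^ 2 := by
  rw [EuclideanSpace.norm_sq_eq]
  fin_cases i <;> simp [PP, add_comm]

theorem PP_deriv (i : Fin 2) (y t : ℝ) :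
    HasDerivAt (fun t => PP i (y, t)) (EuclideanSpace.single i 1) t := by
  have : (fun t => PP i (y, t)) = fun t => PP i (y, 0) + t • (EuclideanSpace.single i (1:ℝ)) := by
    funext t
    ext j
    fin_cases i <;> fin_cases j <;> simp [PP]
  rw [this]
  simpa using ((hasDerivAt_id t).smul_const (EuclideanSpace.single i (1:ℝ))).const_add (PP i (y, 0))

theorem slicing (E : Set V2) (i : Fin 2) : ∃ M : ℝ → ℝ≥0∞, Measurable M ∧
    ∫⁻ y, M y ≤ μH[1] E ∧ ∀ y, ∀ F : Finset ℝ, (∀ t ∈ F, PP i (y, t) ∈ E) → (F.card : ℝ≥0∞) ≤ M y := by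
  let S : ℕ → ℤ → Set V2 := fun n m => {x : V2 | ⌊x i * n⌋ = m}
  have hcm : ∀ j : Fin 2, Measurable (fun x : V2 => x j) := fun j => by fun_prop
  have hSm : ∀ n m, MeasurableSet (S n m) := by
    intro n m
    exact (Int.measurable_floor.comp ((hcm i).mul_const (n:ℝ))) (measurableSet_singleton m)
  let A : ℕ → ℤ → Set ℝ := fun n m => toMeasurable volume ((fun x : V2 => x (1 - i)) '' (S n m ∩ E))
  have hA : ∀ n m, volume (A n m) ≤ μH[1] (S n m ∩ E) := by
    intro n m
    rw [measure_toMeasurable, ← hausdorffMeasure_real]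
    have hl : LipschitzWith 1 (fun x : V2 => x (1 - i)) := by
      refine LipschitzWith.of_dist_le_mul fun x y => ?_
      rw [dist_eq_norm, dist_eq_norm]
      simpa using PiLp.norm_apply_le (x - y) (1 - i)
    simpa using hl.hausdorffMeasure_image_le (d := 1) zero_le_one (S n m ∩ E)
  let Mn : ℕ → ℝ → ℝ≥0∞ := fun n y => ∑' m : ℤ, (A n m).indicator 1 y
  have hMm : ∀ n, Measurable (Mn n) := fun n => Measurable.ennreal_tsum fun m =>
    measurable_one.indicator (measurableSet_toMeasurable _ _)
  refine ⟨fun y => liminf (fun n => Mn n y) atTop, Measurable.liminf hMm, ?_, ?_⟩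
  · refine (lintegral_liminf_le hMm).trans ?_
    have : ∀ n, ∫⁻ y, Mn n y ≤ μH[1] E := by
      intro n
      rw [lintegral_tsum (fun m => (measurable_one.indicator
        (measurableSet_toMeasurable _ _)).aemeasurable)]
      calc ∑' m, ∫⁻ y, (A n m).indicator 1 y = ∑' m, volume (A n m) := by
            congr 1; funext m; exact lintegral_indicator_one (measurableSet_toMeasurable _ _)
        _ ≤ ∑' m, μH[1] (S n m ∩ E) := ENNReal.tsum_le_tsum (hA n)
        _ = ∑' m, ((μH[1] : Measure V2).restrict E) (S n m) := by
            congr 1; funext m; rw [Measure.restrict_apply (hSm n m)]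
        _ = ((μH[1] : Measure V2).restrict E) (⋃ m, S n m) := by
            rw [measure_iUnion _ (hSm n)]
            intro m m' hmm
            rw [Function.onFun, Set.disjoint_left]
            intro x hx hx'
            exact hmm (hx.symm.trans hx')
        _ ≤ ((μH[1] : Measure V2).restrict E) Set.univ := measure_mono (Set.subset_univ _)
        _ = μH[1] E := by simp
    calc _ ≤ liminf (fun _ : ℕ => μH[1] E) atTop := liminf_le_liminf (Eventually.of_forall this)
      _ = _ := by simp
  · intro y F hF
    have hinj : ∀ᶠ n : ℕ in atTop, Set.InjOn (fun t : ℝ => ⌊t * n⌋) F := by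
      have : ∀ᶠ n : ℕ in atTop, ∀ s ∈ F, ∀ t ∈ F, s ≠ t → 1 < |s - t| * n := by
        rw [Filter.eventually_all_finset]
        intro s _
        rw [Filter.eventually_all_finset]
        intro t _
        by_cases hst : s = t
        · simp [hst]
        · have := (tendsto_natCast_atTop_atTop (R := ℝ)).const_mul_atTop
            (abs_pos.2 (sub_ne_zero.2 hst))
          filter_upwards [this.eventually_gt_atTop 1] with n hn _ using hn
      filter_upwards [this] with n hn s hs t ht hst
      by_contra hne
      have h1 := hn s hs t ht hne
      have h2 := Int.abs_sub_lt_one_of_floor_eq_floor hst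
      rw [← sub_mul, abs_mul, Nat.abs_cast] at h2
      linarith
    refine le_liminf_of_le (by isBoundedDefault) ?_
    filter_upwards [hinj] with n hn
    calc (F.card : ℝ≥0∞) = ∑ t ∈ F, 1 := by simp
      _ ≤ ∑ t ∈ F, (A n ⌊t * n⌋).indicator 1 y := by
          refine Finset.sum_le_sum fun t ht => ?_
          have : y ∈ A n ⌊t * n⌋ := by
            apply subset_toMeasurable
            refine ⟨PP i (y, t), ⟨?_, hF t ht⟩, PP_other i (y, t)⟩
            simp [S, PP_i]
          simp [this]
      _ = ∑ m ∈ F.image (fun t : ℝ => ⌊t * n⌋), (A n m).indicator 1 y := by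
          rw [Finset.sum_image hn]
      _ ≤ _ := ENNReal.sum_le_tsum _

theorem vortex_lip (x0 x : V2) (hx0 : x0 ≠ 0) :
    ‖vortex x - vortex x0‖ ≤ 2 / ‖x0‖ * ‖x - x0‖ := by
  have h0 : 0 < ‖x0‖ := norm_pos_iff.2 hx0
  have e : vortex x - vortex x0 = ‖x0‖⁻¹ • (x - x0) + (‖x‖⁻¹ - ‖x0‖⁻¹) • x := by
    simp only [vortex]; module
  rw [e]
  have h1 : ‖(‖x‖⁻¹ - ‖x0‖⁻¹) • x‖ ≤ ‖x0‖⁻¹ * ‖x - x0‖ := by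
    rw [norm_smul, Real.norm_eq_abs]
    by_cases hx : x = 0
    · subst hx; simp only [smul_zero, norm_zero, mul_zero]; positivity
    have hxp : 0 < ‖x‖ := norm_pos_iff.2 hx
    have : (‖x‖⁻¹ - ‖x0‖⁻¹) = (‖x0‖ - ‖x‖) * ‖x0‖⁻¹ * ‖x‖⁻¹ := by field_simp
    rw [this, abs_mul, abs_mul, abs_of_pos (inv_pos.2 h0), abs_of_pos (inv_pos.2 hxp)]
    have h2 := abs_norm_sub_norm_le x0 x
    rw [norm_sub_rev] at h2
    calc _ = |‖x0‖ - ‖x‖| * ‖x0‖⁻¹ := by field_simp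
      _ ≤ ‖x - x0‖ * ‖x0‖⁻¹ := by gcongr
      _ = _ := mul_comm _ _
  calc _ ≤ ‖‖x0‖⁻¹ • (x - x0)‖ + ‖(‖x‖⁻¹ - ‖x0‖⁻¹) • x‖ := norm_add_le _ _
    _ ≤ ‖x0‖⁻¹ * ‖x - x0‖ + ‖x0‖⁻¹ * ‖x - x0‖ := by
        refine add_le_add ?_ h1
        rw [norm_smul]; simp
    _ = _ := by ring

theorem vortex_contDiffAt (x : V2) (hx : x ≠ 0) : ContDiffAt ℝ 1 vortex x := by
  unfold vortex
  exact ((contDiffAt_norm ℝ hx).inv (norm_ne_zero_iff.2 hx)).smul contDiffAt_id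

theorem vortex_measurable : Measurable vortex := by
  unfold vortex; fun_prop

theorem vortex_norm_le (x : V2) : ‖vortex x‖ ≤ 1 := by
  unfold vortex
  rw [norm_smul, norm_inv, norm_norm]
  by_cases hx : x = 0
  · simp [hx]
  · rw [inv_mul_cancel₀ (norm_ne_zero_iff.2 hx)]

theorem inv_norm_integrable (l : ℝ) :
    IntegrableOn (fun x : V2 => ‖x‖⁻¹) (ball (0 : V2) l) := by
  rw [integrableOn_fun_norm_addHaar (volume : Measure V2) (f := fun r : ℝ => r⁻¹)]
  have : IntegrableOn (fun _ : ℝ => (1:ℝ)) (Set.Ioo 0 l) := by simp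
  refine this.congr_fun ?_ measurableSet_Ioo
  intro r hr
  have : r ≠ 0 := hr.1.ne'
  simp [this]

theorem vortex_fderiv_le (x : V2) (hx : x ≠ 0) : ‖fderiv ℝ vortex x‖ ≤ 2 / ‖x‖ :=
  norm_fderiv_le_of_lip' ℝ (by positivity) (Eventually.of_forall fun y => vortex_lip x y hx)

theorem lineBound (l : ℝ) (v : V2 → V2) (K : ℝ≥0) (hv : LipschitzWith K v) (ψ : V2 → ℝ)
    (hψ : ∀ x, x ≠ 0 → ContDiffAt ℝ 1 ψ x) (C : ℝ) (hC : 0 ≤ C) (hψC : ∀ x, |ψ x| ≤ C)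
    (c : ℝ) (hc : 0 ≤ c) (i j : Fin 2) (y : ℝ) (hy : y ≠ 0)
    (hd : ∀ᵐ t : ℝ, DifferentiableAt ℝ v (PP i (y, t))) (N : ℕ)
    (hN : ∀ F : Finset ℝ, (∀ t ∈ F, PP i (y, t) ∈
      {x : V2 | x ∈ ball (0 : V2) l \ {0} ∧ ‖v x - vortex x‖ = c}) → F.card ≤ N) :
    |∫ t, ({x : V2 | x ∈ ball (0 : V2) l \ {0} ∧ ‖v x - vortex x‖ ≤ c}.indicator
      (fun x => ψ x * (fderiv ℝ v x (EuclideanSpace.single i 1) j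
          - fderiv ℝ vortex x (EuclideanSpace.single i 1) j)
        + fderiv ℝ ψ x (EuclideanSpace.single i 1) * (v x j - vortex x j))) (PP i (y, t))|
      ≤ 2 * (C * c) * (N + 1) := by
  have hP0 : ∀ t, PP i (y, t) ≠ 0 := by
    intro t h
    have := PP_other i (y, t)
    rw [h] at this
    exact hy (by simpa using this.symm)
  have hball : ∀ t, PP i (y, t) ∈ ball (0 : V2) l \ {0} ↔
      t ∈ Set.Ioo (-√(l ^ 2 - y ^ 2)) (√(l ^ 2 - y ^ 2)) ∧ 0 < l := by
    intro t
    have h2 := PP_norm i (y, t)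
    simp only [Set.mem_diff, mem_ball_zero_iff, Set.mem_singleton_iff, hP0 t, not_false_eq_true,
      and_true, Set.mem_Ioo]
    rw [← abs_lt, Real.lt_sqrt (abs_nonneg t), sq_abs]
    constructor
    · intro h
      have : 0 < l := (norm_nonneg _).trans_lt h
      refine ⟨?_, this⟩
      have := pow_lt_pow_left₀ h (norm_nonneg _) two_ne_zero
      simp only at h2
      linarith
    · rintro ⟨h, hl⟩
      apply lt_of_pow_lt_pow_left₀ 2 hl.le
      simp only at h2
      linarith
  rcases le_or_gt l 0 with hl | hl
  · have : ∀ t, PP i (y, t) ∉ {x : V2 | x ∈ ball (0 : V2) l \ {0} ∧ ‖v x - vortex x‖ ≤ c} := by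
      intro t ht
      exact absurd ((hball t).1 ht.1).2 (not_lt.2 hl)
    simp only [Set.indicator_of_notMem (this _), integral_zero, abs_zero]
    positivity
  set b := √(l ^ 2 - y ^ 2) with hb
  have hb0 : 0 ≤ b := Real.sqrt_nonneg _
  have hball' : ∀ t, PP i (y, t) ∈ ball (0 : V2) l \ {0} ↔ t ∈ Set.Ioo (-b) b := by
    intro t; rw [hball t]; simp [hl]
  have hPd : ContDiff ℝ 1 (fun t => PP i (y, t)) := by
    have : (fun t => PP i (y, t)) = fun t => PP i (y, 0) + t • (EuclideanSpace.single i (1:ℝ)) := by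
      funext t
      ext j
      fin_cases i <;> fin_cases j <;> simp [PP]
    rw [this]
    fun_prop
  have hproj : ContDiff ℝ 1 (fun x : V2 => x j) := by fun_prop
  have hψl : ContDiff ℝ 1 (fun t => ψ (PP i (y, t))) :=
    contDiff_iff_contDiffAt.2 fun t => (hψ _ (hP0 t)).comp t hPd.contDiffAt
  have hvl : ContDiff ℝ 1 (fun t => vortex (PP i (y, t))) :=
    contDiff_iff_contDiffAt.2 fun t =>
      ContDiffAt.comp (g := vortex) (f := fun t => PP i (y, t)) t (vortex_contDiffAt _ (hP0 t))
        hPd.contDiffAt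
  have hvlj : ContDiff ℝ 1 (fun t => vortex (PP i (y, t)) j) := hproj.comp hvl
  have acψ : AbsolutelyContinuousOnInterval (fun t => ψ (PP i (y, t))) (-b) b :=
    hψl.contDiffOn.absolutelyContinuousOnInterval
  have acv : AbsolutelyContinuousOnInterval (fun t => vortex (PP i (y, t)) j) (-b) b :=
    hvlj.contDiffOn.absolutelyContinuousOnInterval
  have acu : AbsolutelyContinuousOnInterval (fun t => v (PP i (y, t)) j) (-b) b := by
    have h1 : LipschitzWith 1 (fun x : V2 => x j) := by
      refine LipschitzWith.of_dist_le_mul fun x y => ?_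
      rw [dist_eq_norm, dist_eq_norm]
      simpa using PiLp.norm_apply_le (x - y) j
    have h2 : LipschitzWith 1 (fun t => PP i (y, t)) := by
      refine LipschitzWith.of_dist_le_mul fun s t => ?_
      rw [EuclideanSpace.dist_eq]
      fin_cases i <;> simp [PP, Real.sqrt_sq_eq_abs, Real.dist_eq]
    exact ((h1.comp (hv.comp h2)).lipschitzOnWith (s := Set.uIcc (-b) b)).absolutelyContinuousOnInterval
  have ach := acψ.fun_mul (acu.fun_sub acv)
  set h : ℝ → ℝ := fun t => ψ (PP i (y, t)) * (v (PP i (y, t)) j - vortex (PP i (y, t)) j) with hh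
  set q : ℝ → ℝ := fun t => ‖v (PP i (y, t)) - vortex (PP i (y, t))‖ with hq
  have hqc : Continuous q :=
    ((hv.continuous.comp hPd.continuous).sub hvl.continuous).norm
  set S := {t | t ∈ Set.Ioo (-b) b ∧ q t = c} with hS
  have hSE : ∀ t ∈ S, PP i (y, t) ∈
      {x : V2 | x ∈ ball (0 : V2) l \ {0} ∧ ‖v x - vortex x‖ = c} :=
    fun t ht => ⟨(hball' t).2 ht.1, ht.2⟩
  have hSfin : S.Finite := by
    by_contra hinf
    obtain ⟨F, hF, hFc⟩ := Set.Infinite.exists_subset_card_eq hinf (N + 1)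
    have := hN F (fun t ht => hSE t (hF ht))
    omega
  have key := oneD_aux h q (C * c) c (by positivity) hSfin.toFinset.card (-b) b hSfin.toFinset rfl
    (fun t ht hqt => hSfin.mem_toFinset.2 ⟨ht, hqt⟩) (fun t ht => (hSfin.mem_toFinset.1 ht).1)
    (by linarith) ach hqc.continuousOn (by
      intro t _ hqt
      rw [hh]
      simp only
      rw [abs_mul]
      refine mul_le_mul (hψC _) (le_trans ?_ hqt) (abs_nonneg _) hC
      simpa using PiLp.norm_apply_le (v (PP i (y, t)) - vortex (PP i (y, t))) j)
  have hcard : hSfin.toFinset.card ≤ N := hN _ (fun t ht => hSE t (hSfin.mem_toFinset.1 ht))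
  have hcard' : (hSfin.toFinset.card : ℝ) ≤ N := by exact_mod_cast hcard
  have heq : ∫ t, ({x : V2 | x ∈ ball (0 : V2) l \ {0} ∧ ‖v x - vortex x‖ ≤ c}.indicator
      (fun x => ψ x * (fderiv ℝ v x (EuclideanSpace.single i 1) j
          - fderiv ℝ vortex x (EuclideanSpace.single i 1) j)
        + fderiv ℝ ψ x (EuclideanSpace.single i 1) * (v x j - vortex x j))) (PP i (y, t)) =
      ∫ t in Set.Ioo (-b) b ∩ {t | q t ≤ c}, deriv h t := by
    rw [← integral_indicator (measurableSet_Ioo.inter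
      (isClosed_le hqc continuous_const).measurableSet)]
    apply integral_congr_ae
    filter_upwards [hd] with t ht
    have hmem : PP i (y, t) ∈ {x : V2 | x ∈ ball (0 : V2) l \ {0} ∧ ‖v x - vortex x‖ ≤ c} ↔
        t ∈ Set.Ioo (-b) b ∩ {t | q t ≤ c} :=
      ⟨fun h => ⟨(hball' t).1 h.1, h.2⟩, fun h => ⟨(hball' t).2 h.1, h.2⟩⟩
    by_cases hm : t ∈ Set.Ioo (-b) b ∩ {t | q t ≤ c}
    · rw [Set.indicator_of_mem hm, Set.indicator_of_mem (hmem.2 hm)]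
      have dP := PP_deriv i y t
      have d1 : HasDerivAt (fun t => ψ (PP i (y, t)))
          (fderiv ℝ ψ (PP i (y, t)) (EuclideanSpace.single i 1)) t :=
        ((hψ _ (hP0 t)).differentiableAt one_ne_zero).hasFDerivAt.comp_hasDerivAt t dP
      have d2 : HasDerivAt (fun t => vortex (PP i (y, t)))
          (fderiv ℝ vortex (PP i (y, t)) (EuclideanSpace.single i 1)) t :=
        HasFDerivAt.comp_hasDerivAt (l := vortex) t
          ((vortex_contDiffAt _ (hP0 t)).differentiableAt one_ne_zero).hasFDerivAt dP
      have d3 : HasDerivAt (fun t => v (PP i (y, t)))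
          (fderiv ℝ v (PP i (y, t)) (EuclideanSpace.single i 1)) t :=
        ht.hasFDerivAt.comp_hasDerivAt t dP
      have d2' : HasDerivAt (fun t => vortex (PP i (y, t)) j)
          (fderiv ℝ vortex (PP i (y, t)) (EuclideanSpace.single i 1) j) t :=
        (EuclideanSpace.proj (𝕜 := ℝ) j : V2 →L[ℝ] ℝ).hasFDerivAt.comp_hasDerivAt t d2
      have d3' : HasDerivAt (fun t => v (PP i (y, t)) j)
          (fderiv ℝ v (PP i (y, t)) (EuclideanSpace.single i 1) j) t :=
        (EuclideanSpace.proj (𝕜 := ℝ) j : V2 →L[ℝ] ℝ).hasFDerivAt.comp_hasDerivAt t d3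
      have := (d1.fun_mul (d3'.fun_sub d2')).deriv
      rw [hh, this]
      ring
    · rw [Set.indicator_of_notMem hm, Set.indicator_of_notMem (fun h => hm (hmem.1 h))]
  rw [heq]
  refine key.trans ?_
  have : 0 ≤ C * c := by positivity
  gcongr

theorem globalBound (l : ℝ) (hl : 0 < l) (v : V2 → V2) (K : ℝ≥0) (hv : LipschitzWith K v)
    (ψ : V2 → ℝ)
    (hψ : ∀ x, x ≠ 0 → ContDiffAt ℝ 1 ψ x) (C : ℝ) (hC : 0 ≤ C) (hψC : ∀ x, |ψ x| ≤ C)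
    (c : ℝ) (hc : 0 ≤ c) (i j : Fin 2)
    (hH : μH[1] {x : V2 | x ∈ ball (0 : V2) l \ {0} ∧ ‖v x - vortex x‖ = c} < ⊤)
    (hgInt : IntegrableOn (fun x => ψ x * (fderiv ℝ v x (EuclideanSpace.single i 1) j
          - fderiv ℝ vortex x (EuclideanSpace.single i 1) j)
        + fderiv ℝ ψ x (EuclideanSpace.single i 1) * (v x j - vortex x j))
        {x : V2 | x ∈ ball (0 : V2) l \ {0} ∧ ‖v x - vortex x‖ ≤ c}) :
    |∫ x in {x : V2 | x ∈ ball (0 : V2) l \ {0} ∧ ‖v x - vortex x‖ ≤ c},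
      (ψ x * (fderiv ℝ v x (EuclideanSpace.single i 1) j
          - fderiv ℝ vortex x (EuclideanSpace.single i 1) j)
        + fderiv ℝ ψ x (EuclideanSpace.single i 1) * (v x j - vortex x j))|
      ≤ 2 * (C * c) * ((μH[1] {x : V2 | x ∈ ball (0 : V2) l \ {0} ∧ ‖v x - vortex x‖ = c}).toReal
        + 2 * l) := by
  set E := {x : V2 | x ∈ ball (0 : V2) l \ {0} ∧ ‖v x - vortex x‖ = c} with hE
  set G := {x : V2 | x ∈ ball (0 : V2) l \ {0} ∧ ‖v x - vortex x‖ ≤ c} with hG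
  set g := fun x => (ψ x * (fderiv ℝ v x (EuclideanSpace.single i 1) j
          - fderiv ℝ vortex x (EuclideanSpace.single i 1) j)
        + fderiv ℝ ψ x (EuclideanSpace.single i 1) * (v x j - vortex x j)) with hg
  have hGm : MeasurableSet G :=
    (measurableSet_ball.diff (measurableSet_singleton 0)).inter
      (measurableSet_le (hv.continuous.measurable.sub vortex_measurable).norm measurable_const)
  obtain ⟨M, hMm, hMi, hMc⟩ := slicing E i
  have hMlt : ∫⁻ y, M y ≠ ⊤ := (hMi.trans_lt hH).ne
  have hMfin : ∀ᵐ y, M y < ⊤ := ae_lt_top hMm hMlt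
  obtain ⟨mp, me⟩ := PP_mp i
  have hintP : Integrable (fun p : ℝ × ℝ => G.indicator g (PP i p)) :=
    (mp.integrable_comp_emb me).2 ((integrable_indicator_iff hGm).2 hgInt)
  have e1 : ∫ x in G, g x = ∫ y, ∫ t, G.indicator g (PP i (y, t)) := by
    rw [← integral_indicator hGm, ← mp.integral_comp me]
    exact integral_prod _ hintP
  have hdae : ∀ᵐ y : ℝ, ∀ᵐ t : ℝ, DifferentiableAt ℝ v (PP i (y, t)) := by
    have h1 : ∀ᵐ x : V2, DifferentiableAt ℝ v x := hv.ae_differentiableAt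
    exact Measure.ae_ae_of_ae_prod (mp.quasiMeasurePreserving.ae h1)
  have hy0 : ∀ᵐ y : ℝ, y ≠ 0 := by simp [ae_iff, measure_singleton]
  let B : ℝ → ℝ := fun y => 2 * (C * c) * ((M y).toReal + (Set.Icc (-l) l).indicator 1 y)
  have hMint : Integrable (fun y => (M y).toReal) :=
    integrable_toReal_of_lintegral_ne_top hMm.aemeasurable hMlt
  have hIint : Integrable ((Set.Icc (-l) l).indicator (1 : ℝ → ℝ)) := by
    rw [integrable_indicator_iff measurableSet_Icc]
    exact integrableOn_const (by simp)
  have hBint : Integrable B := (hMint.add hIint).const_mul _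
  have hbound : ∀ᵐ y : ℝ, ‖∫ t, G.indicator g (PP i (y, t))‖ ≤ B y := by
    filter_upwards [hdae, hy0, hMfin] with y h1 h2 h3
    by_cases hyl : y ∈ Set.Icc (-l) l
    · have := lineBound l v K hv ψ hψ C hC hψC c hc i j y h2 h1 ⌊(M y).toReal⌋₊ (by
        intro F hF
        apply Nat.le_floor
        have := ENNReal.toReal_mono h3.ne (hMc y F hF)
        simpa using this)
      refine this.trans ?_
      have hfl : ((⌊(M y).toReal⌋₊ : ℕ) : ℝ) ≤ (M y).toReal := Nat.floor_le ENNReal.toReal_nonneg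
      have : 0 ≤ C * c := by positivity
      simp only [B, Set.indicator_of_mem hyl, Pi.one_apply]
      gcongr
    · have : ∀ t, PP i (y, t) ∉ G := by
        intro t ht
        apply hyl
        have h4 : ‖PP i (y, t)‖ < l := by simpa using ht.1.1
        have h5 := PP_norm i (y, t)
        have h6 := pow_lt_pow_left₀ h4 (norm_nonneg _) two_ne_zero
        simp only at h5
        rw [Set.mem_Icc, ← abs_le]
        apply abs_le_of_sq_le_sq _ hl.le
        nlinarith [sq_nonneg t]
      simp only [Set.indicator_of_notMem (this _), integral_zero, norm_zero, B]
      have : 0 ≤ C * c := by positivity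
      simp only [Set.indicator_of_notMem hyl]
      positivity
  rw [e1]
  refine (norm_integral_le_of_norm_le hBint hbound).trans ?_
  simp only [B]
  rw [integral_const_mul, integral_add hMint hIint, integral_indicator_one measurableSet_Icc,
    integral_toReal hMm.aemeasurable hMfin]
  have : 0 ≤ C * c := by positivity
  have h7 := ENNReal.toReal_mono hH.ne hMi
  have h8 : volume.real (Set.Icc (-l) l) = 2 * l := by
    rw [Real.volume_real_Icc_of_le (by linarith)]; ring
  rw [h8]
  gcongr

theorem main_aux (l : ℝ) (hl : 0 < l)
    (u : ℕ → V2 → V2) (K : ℕ → ℝ≥0)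
    (hLip : ∀ k, LipschitzWith (K k) (u k))
    (hgrad : (⨆ k, ∫⁻ x in ball (0 : V2) l,
        ENNReal.ofReal (Real.sqrt (frobSq (fderiv ℝ (u k) x)))) < ⊤)
    (lam : ℕ → ℝ) (hmem : ∀ k, lam k ∈ Set.Ioo (0 : ℝ) 2)
    (hlam0 : Tendsto lam atTop (𝓝 0))
    (hH : ∀ k, μH[1] {x : V2 | x ∈ ball (0 : V2) l \ {0} ∧ ‖u k x - vortex x‖ = lam k} < ⊤)
    (hHlim : Tendsto (fun k => ENNReal.ofReal (lam k) *
        μH[1] {x : V2 | x ∈ ball (0 : V2) l \ {0} ∧ ‖u k x - vortex x‖ = lam k})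
      atTop (𝓝 0))
    (D : ℕ → Set V2)
    (hD : ∀ k, D k = {x : V2 | x ∈ ball (0 : V2) l \ {0} ∧ lam k < ‖u k x - vortex x‖})
    (ζ : V2 → ℝ) (hζmeas : Measurable ζ) (hζmem : ∀ x, ζ x ∈ Set.Icc (0 : ℝ) 1)
    (hconv : ∀ g : V2 → ℝ, Integrable g (volume.restrict (ball (0 : V2) l)) →
      Tendsto (fun k => ∫ x in D k, g x) atTop (𝓝 (∫ x in ball (0 : V2) l, ζ x * g x)))
    (φ : V2 × V2 → ℝ) (hφ : ContDiff ℝ (⊤ : ℕ∞) φ) (hcs : HasCompactSupport φ) :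
      (Tendsto (fun k => ∫ x in ball (0 : V2) l \ D k, φ (x, u k x)) atTop
        (𝓝 (∫ x in ball (0 : V2) l, φ (x, vortex x) * (1 - ζ x)))) ∧
      (∀ i j : Fin 2,
        Tendsto (fun k => ∫ x in ball (0 : V2) l \ D k,
            φ (x, u k x) * fderiv ℝ (u k) x (EuclideanSpace.single i 1) j) atTop
          (𝓝 (∫ x in ball (0 : V2) l,
            φ (x, vortex x) * fderiv ℝ vortex x (EuclideanSpace.single i 1) j
              * (1 - ζ x)))) := by
  obtain ⟨L, hL⟩ := ContDiff.lipschitzWith_of_hasCompactSupport hcs hφ (by simp)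
  obtain ⟨C, hC⟩ := hcs.exists_bound_of_continuous hφ.continuous
  have hC0 : 0 ≤ C := (norm_nonneg _).trans (hC 0)
  set ψ : V2 → ℝ := fun x => φ (x, vortex x) with hψdef
  have hψm : Measurable ψ := hφ.continuous.measurable.comp (measurable_id.prodMk vortex_measurable)
  have hψC : ∀ x, |ψ x| ≤ C := fun x => hC _
  have hum : ∀ k, Measurable (u k) := fun k => (hLip k).continuous.measurable
  have hφum : ∀ k, Measurable (fun x => φ (x, u k x)) := fun k =>
    hφ.continuous.measurable.comp (measurable_id.prodMk (hum k))
  have hψd : ∀ x, x ≠ 0 → ContDiffAt ℝ 1 ψ x := by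
    intro x hx
    have h1 : ContDiffAt ℝ 1 φ (x, vortex x) := (hφ.of_le (by simp)).contDiffAt
    exact ContDiffAt.comp (g := φ) (f := fun x => (x, vortex x)) x h1
      (contDiffAt_id.prodMk (vortex_contDiffAt x hx))
  have hae0 : ∀ᵐ x : V2, x ≠ 0 := by simp [ae_iff, measure_singleton]
  set G : ℕ → Set V2 := fun k => {x : V2 | x ∈ ball (0 : V2) l \ {0} ∧ ‖u k x - vortex x‖ ≤ lam k}
    with hG
  have hGm : ∀ k, MeasurableSet (G k) := fun k =>
    (measurableSet_ball.diff (measurableSet_singleton 0)).inter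
      (measurableSet_le ((hum k).sub vortex_measurable).norm measurable_const)
  have hDm : ∀ k, MeasurableSet (D k) := fun k => by
    rw [hD k]
    exact (measurableSet_ball.diff (measurableSet_singleton 0)).inter
      (measurableSet_lt measurable_const ((hum k).sub vortex_measurable).norm)
  have hDB : ∀ k, D k ⊆ ball (0 : V2) l := fun k => by
    rw [hD k]; exact fun x hx => hx.1.1
  have hGB : ∀ k, G k ⊆ ball (0 : V2) l := fun k x hx => hx.1.1
  have hset : ∀ k, (ball (0 : V2) l \ D k : Set V2) =ᵐ[volume] G k := by
    intro k
    filter_upwards [hae0] with x hx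
    apply propext
    change x ∈ ball (0 : V2) l \ D k ↔ x ∈ G k
    rw [hD k]
    constructor
    · rintro ⟨h1, h2⟩
      refine ⟨⟨h1, hx⟩, ?_⟩
      by_contra h3
      exact h2 ⟨⟨h1, hx⟩, not_le.1 h3⟩
    · rintro ⟨h1, h2⟩
      exact ⟨h1.1, fun h3 => absurd h3.2 (not_lt.2 h2)⟩
  have hsI : ∀ k (f : V2 → ℝ), ∫ x in ball (0 : V2) l \ D k, f x = ∫ x in G k, f x :=
    fun k f => setIntegral_congr_set (hset k)
  have hconvG : ∀ g : V2 → ℝ, IntegrableOn g (ball (0 : V2) l) →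
      Tendsto (fun k => ∫ x in G k, g x) atTop (𝓝 (∫ x in ball (0 : V2) l, g x * (1 - ζ x))) := by
    intro g hg
    have e1 : ∀ k, ∫ x in G k, g x = (∫ x in ball (0 : V2) l, g x) - ∫ x in D k, g x := by
      intro k
      rw [← hsI k, integral_diff (hDm k) hg (hDB k)]
    have hζg : IntegrableOn (fun x => ζ x * g x) (ball (0 : V2) l) := by
      refine hg.bdd_mul (c := 1) hζmeas.aestronglyMeasurable (Eventually.of_forall fun x => ?_)
      rw [Real.norm_eq_abs, abs_of_nonneg (hζmem x).1]
      exact (hζmem x).2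
    have e2 : ∫ x in ball (0 : V2) l, g x * (1 - ζ x) =
        (∫ x in ball (0 : V2) l, g x) - ∫ x in ball (0 : V2) l, ζ x * g x := by
      rw [← integral_sub hg hζg]
      congr 1; funext x; ring
    rw [e2]
    simp only [e1]
    exact tendsto_const_nhds.sub (hconv g hg)
  have hbd : ∀ (f : V2 → ℝ), Measurable f → ∀ c, (∀ x, |f x| ≤ c) → IntegrableOn f (ball (0 : V2) l) := by
    intro f hf c hc
    exact Measure.integrableOn_of_bounded measure_ball_lt_top.ne hf.aestronglyMeasurable
      (Eventually.of_forall hc)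
  have hψi : IntegrableOn ψ (ball (0 : V2) l) := hbd ψ hψm C hψC
  have hφui : ∀ k, IntegrableOn (fun x => φ (x, u k x)) (ball (0 : V2) l) := fun k =>
    hbd _ (hφum k) C (fun x => hC _)
  have hclose : ∀ k, ∀ x ∈ G k, |φ (x, u k x) - ψ x| ≤ L * lam k := by
    intro k x hx
    have h1 := hL.dist_le_mul (x, u k x) (x, vortex x)
    rw [Real.dist_eq, Prod.dist_eq, dist_self, max_eq_right dist_nonneg, dist_eq_norm] at h1
    exact h1.trans (mul_le_mul_of_nonneg_left hx.2 L.2)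
  have hsq : ∀ (a b c : ℕ → ℝ) (z : ℝ), Tendsto b atTop (𝓝 z) → Tendsto c atTop (𝓝 0) →
      (∀ k, |a k - b k| ≤ c k) → Tendsto a atTop (𝓝 z) := by
    intro a b c z hb hc hab
    have h1 : Tendsto (fun k => a k - b k) atTop (𝓝 0) := squeeze_zero_norm hab hc
    simpa using h1.add hb
  have hlam : ∀ k, 0 ≤ lam k := fun k => (hmem k).1.le
  constructor
  · simp only [hsI]
    refine hsq _ _ (fun k => L * lam k * volume.real (ball (0 : V2) l)) _ (hconvG ψ hψi) ?_ ?_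
    · simpa using (hlam0.const_mul (L:ℝ)).mul_const (volume.real (ball (0 : V2) l))
    · intro k
      rw [← integral_sub ((hφui k).mono_set (hGB k)) (hψi.mono_set (hGB k))]
      have h1 := norm_setIntegral_le_of_norm_le_const (μ := volume) (s := G k)
        (f := fun x => φ (x, u k x) - ψ x) ((measure_mono (hGB k)).trans_lt measure_ball_lt_top)
        (hclose k)
      refine h1.trans ?_
      have : volume.real (G k) ≤ volume.real (ball (0 : V2) l) :=
        measureReal_mono (hGB k) measure_ball_lt_top.ne
      have := mul_nonneg L.2 (hlam k)
      gcongr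
  · intro i j
    simp only [hsI]
    set e : V2 := EuclideanSpace.single i 1 with he
    have hen : ‖e‖ = 1 := by simp [he]
    have happ : ∀ T : V2 →L[ℝ] V2, |T e j| ≤ ‖T‖ := by
      intro T
      have h1 := PiLp.norm_apply_le (T e) j
      have h2 := T.le_opNorm e
      rw [hen, mul_one] at h2
      exact h1.trans h2
    have hcoord : Measurable (fun x : V2 => x j) := by fun_prop
    have hdum : ∀ k, Measurable (fun x => fderiv ℝ (u k) x e j) := fun k =>
      hcoord.comp (measurable_fderiv_apply_const ℝ (u k) e)
    have hdvm : Measurable (fun x => fderiv ℝ vortex x e j) :=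
      hcoord.comp (measurable_fderiv_apply_const ℝ vortex e)
    have hdψm : Measurable (fun x => fderiv ℝ ψ x e) := measurable_fderiv_apply_const ℝ ψ e
    have hdui : ∀ k, IntegrableOn (fun x => fderiv ℝ (u k) x e j) (ball (0 : V2) l) := fun k =>
      hbd _ (hdum k) (K k) (fun x => (happ _).trans (norm_fderiv_le_of_lipschitz ℝ (hLip k)))
    have hinv := inv_norm_integrable l
    have hdvi : IntegrableOn (fun x => fderiv ℝ vortex x e j) (ball (0 : V2) l) := by
      refine Integrable.mono' (hinv.const_mul 2) hdvm.aestronglyMeasurable ?_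
      filter_upwards [ae_restrict_of_ae hae0] with x hx
      have := (happ _).trans (vortex_fderiv_le x hx)
      rwa [div_eq_mul_inv] at this
    have hdψi : IntegrableOn (fun x => fderiv ℝ ψ x e) (ball (0 : V2) l) := by
      have h1 : IntegrableOn (fun x : V2 => (L : ℝ) * (1 + 2 * ‖x‖⁻¹)) (ball (0 : V2) l) :=
        (((integrableOn_const (by exact measure_ball_lt_top.ne)).add (hinv.const_mul 2)).const_mul _)
      refine Integrable.mono' h1 hdψm.aestronglyMeasurable ?_
      filter_upwards [ae_restrict_of_ae hae0] with x hx
      have h2 : ‖fderiv ℝ ψ x‖ ≤ (L : ℝ) * (1 + 2 * ‖x‖⁻¹) := by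
        refine norm_fderiv_le_of_lip' ℝ (by positivity) (Eventually.of_forall fun y => ?_)
        have h3 := hL.dist_le_mul (y, vortex y) (x, vortex x)
        rw [dist_eq_norm, Prod.dist_eq, dist_eq_norm, dist_eq_norm] at h3
        refine h3.trans ?_
        rw [mul_assoc]
        refine mul_le_mul_of_nonneg_left ?_ L.2
        have h4 := vortex_lip x y hx
        rw [div_eq_mul_inv] at h4
        have h5 : 0 ≤ 2 * ‖x‖⁻¹ * ‖y - x‖ := by positivity
        simp only
        rw [add_mul, one_mul]
        exact max_le (by linarith) (by linarith [norm_nonneg (y - x)])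
      have h3 := (fderiv ℝ ψ x).le_opNorm e
      rw [hen, mul_one] at h3
      exact h3.trans h2
    have hψdv : IntegrableOn (fun x => ψ x * fderiv ℝ vortex x e j) (ball (0 : V2) l) :=
      hdvi.bdd_mul (c := C) hψm.aestronglyMeasurable (Eventually.of_forall hψC)
    have hψdu : ∀ k, IntegrableOn (fun x => ψ x * fderiv ℝ (u k) x e j) (ball (0 : V2) l) :=
      fun k => (hdui k).bdd_mul (c := C) hψm.aestronglyMeasurable (Eventually.of_forall hψC)
    have hφdu : ∀ k, IntegrableOn (fun x => φ (x, u k x) * fderiv ℝ (u k) x e j)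
        (ball (0 : V2) l) :=
      fun k => (hdui k).bdd_mul (c := C) (hφum k).aestronglyMeasurable
        (Eventually.of_forall fun x => hC _)
    have hwG : ∀ k, ∀ x ∈ G k, |u k x j - vortex x j| ≤ lam k := by
      intro k x hx
      have h1 := PiLp.norm_apply_le (u k x - vortex x) j
      exact h1.trans hx.2
    have hwm : ∀ k, Measurable (fun x => u k x j - vortex x j) := fun k =>
      (hcoord.comp (hum k)).sub (hcoord.comp vortex_measurable)
    have hdψw : ∀ k, IntegrableOn (fun x => fderiv ℝ ψ x e * (u k x j - vortex x j)) (G k) := by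
      intro k
      refine (hdψi.mono_set (hGB k)).mul_bdd (c := lam k) (hwm k).aestronglyMeasurable ?_
      filter_upwards [ae_restrict_mem (hGm k)] with x hx using hwG k x hx
    have hI2i : ∀ k, IntegrableOn (fun x => ψ x * (fderiv ℝ (u k) x e j - fderiv ℝ vortex x e j)
        + fderiv ℝ ψ x e * (u k x j - vortex x j)) (G k) := by
      intro k
      have h1 : IntegrableOn (fun x => ψ x * (fderiv ℝ (u k) x e j - fderiv ℝ vortex x e j))
          (G k) := by
        have := ((hψdu k).sub hψdv).mono_set (hGB k)
        refine this.congr_fun (fun x _ => ?_) (hGm k)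
        simp only [Pi.sub_apply]; ring
      exact h1.add (hdψw k)
    set Mg := (⨆ k, ∫⁻ x in ball (0 : V2) l,
        ENNReal.ofReal (Real.sqrt (frobSq (fderiv ℝ (u k) x)))).toReal with hMg
    have hMgb : ∀ k, ∫ x in ball (0 : V2) l, |fderiv ℝ (u k) x e j| ≤ Mg := by
      intro k
      rw [integral_eq_lintegral_of_nonneg_ae (Eventually.of_forall fun x => abs_nonneg _)
        (hdum k).abs.aestronglyMeasurable]
      refine ENNReal.toReal_mono hgrad.ne ?_
      refine le_trans (lintegral_mono fun x => ENNReal.ofReal_le_ofReal ?_)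
        (le_iSup (fun k => ∫⁻ x in ball (0 : V2) l,
          ENNReal.ofReal (Real.sqrt (frobSq (fderiv ℝ (u k) x)))) k)
      apply Real.abs_le_sqrt
      unfold frobSq
      have h1 : (fderiv ℝ (u k) x e j) ^ 2 ≤
          ∑ m : Fin 2, (fderiv ℝ (u k) x (EuclideanSpace.single m 1) j) ^ 2 :=
        Finset.single_le_sum (f := fun m : Fin 2 =>
          (fderiv ℝ (u k) x (EuclideanSpace.single m 1) j) ^ 2) (fun m _ => sq_nonneg _)
          (Finset.mem_univ i)
      exact h1.trans (Finset.single_le_sum (f := fun j : Fin 2 => ∑ m : Fin 2,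
          (fderiv ℝ (u k) x (EuclideanSpace.single m 1) j) ^ 2)
          (fun m _ => Finset.sum_nonneg fun _ _ => sq_nonneg _) (Finset.mem_univ j))
    set Hk : ℕ → ℝ≥0∞ := fun k =>
      μH[1] {x : V2 | x ∈ ball (0 : V2) l \ {0} ∧ ‖u k x - vortex x‖ = lam k} with hHk
    have hI2 : ∀ k, |∫ x in G k, (ψ x * (fderiv ℝ (u k) x e j - fderiv ℝ vortex x e j)
        + fderiv ℝ ψ x e * (u k x j - vortex x j))| ≤ 2 * (C * lam k) * ((Hk k).toReal + 2 * l) :=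
      fun k => globalBound l hl (u k) (K k) (hLip k) ψ hψd C hC0 hψC (lam k) (hlam k) i j (hH k)
        (hI2i k)
    have hI1 : ∀ k, |∫ x in G k, (φ (x, u k x) - ψ x) * fderiv ℝ (u k) x e j|
        ≤ L * lam k * Mg := by
      intro k
      have h1 : IntegrableOn (fun x => L * lam k * |fderiv ℝ (u k) x e j|) (ball (0 : V2) l) :=
        (hdui k).abs.const_mul _
      have hLl := mul_nonneg L.2 (hlam k)
      rw [← Real.norm_eq_abs]
      refine (norm_integral_le_of_norm_le (h1.mono_set (hGB k)) ?_).trans ?_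
      · filter_upwards [ae_restrict_mem (hGm k)] with x hx
        rw [norm_mul]
        exact mul_le_mul_of_nonneg_right (hclose k x hx) (norm_nonneg _)
      · refine (setIntegral_mono_set h1 (Eventually.of_forall fun x =>
          mul_nonneg hLl (abs_nonneg _)) (hGB k).eventuallyLE).trans ?_
        rw [integral_const_mul]
        exact mul_le_mul_of_nonneg_left (hMgb k) hLl
    have hI3 : ∀ k, |∫ x in G k, fderiv ℝ ψ x e * (u k x j - vortex x j)|
        ≤ lam k * ∫ x in ball (0 : V2) l, |fderiv ℝ ψ x e| := by
      intro k
      have h1 : IntegrableOn (fun x => lam k * |fderiv ℝ ψ x e|) (ball (0 : V2) l) :=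
        hdψi.abs.const_mul _
      rw [← Real.norm_eq_abs]
      refine (norm_integral_le_of_norm_le (h1.mono_set (hGB k)) ?_).trans ?_
      · filter_upwards [ae_restrict_mem (hGm k)] with x hx
        rw [norm_mul, mul_comm ‖_‖]
        exact mul_le_mul_of_nonneg_right (hwG k x hx) (norm_nonneg _)
      · refine (setIntegral_mono_set h1 (Eventually.of_forall fun x =>
          mul_nonneg (hlam k) (abs_nonneg _)) (hGB k).eventuallyLE).trans ?_
        rw [integral_const_mul]
    have hlamH : Tendsto (fun k => lam k * (Hk k).toReal) atTop (𝓝 0) := by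
      have h1 := (ENNReal.tendsto_toReal ENNReal.zero_ne_top).comp hHlim
      simp only [ENNReal.toReal_zero] at h1
      refine h1.congr fun k => ?_
      simp only [Function.comp, ENNReal.toReal_mul, ENNReal.toReal_ofReal (hlam k), hHk]
    refine hsq _ _ (fun k => L * lam k * Mg + 2 * (C * lam k) * ((Hk k).toReal + 2 * l)
      + lam k * ∫ x in ball (0 : V2) l, |fderiv ℝ ψ x e|) _
      (hconvG (fun x => ψ x * fderiv ℝ vortex x e j) hψdv) ?_ ?_
    · have t1 := (hlam0.const_mul (L:ℝ)).mul_const Mg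
      have t2 := (hlamH.const_mul (2 * C)).add (hlam0.const_mul (2 * C * (2 * l)))
      have t3 := hlam0.mul_const (∫ x in ball (0 : V2) l, |fderiv ℝ ψ x e|)
      have t := (t1.add t2).add t3
      simp only [mul_zero, zero_mul, add_zero] at t
      refine t.congr fun k => ?_
      ring
    · intro k
      have hi1 : IntegrableOn (fun x => (φ (x, u k x) - ψ x) * fderiv ℝ (u k) x e j) (G k) := by
        refine (((hφdu k).sub (hψdu k)).mono_set (hGB k)).congr_fun (fun x _ => ?_) (hGm k)
        simp only [Pi.sub_apply]; ring
      have hdec : (∫ x in G k, φ (x, u k x) * fderiv ℝ (u k) x e j)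
          - ∫ x in G k, ψ x * fderiv ℝ vortex x e j =
          (∫ x in G k, (φ (x, u k x) - ψ x) * fderiv ℝ (u k) x e j)
          + (∫ x in G k, (ψ x * (fderiv ℝ (u k) x e j - fderiv ℝ vortex x e j)
            + fderiv ℝ ψ x e * (u k x j - vortex x j)))
          - ∫ x in G k, fderiv ℝ ψ x e * (u k x j - vortex x j) := by
        rw [← integral_sub ((hφdu k).mono_set (hGB k)) (hψdv.mono_set (hGB k)),
          ← integral_add hi1 (hI2i k), ← integral_sub (hi1.fun_add (hI2i k)) (hdψw k)]
        congr 1; funext x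
        ring
      rw [hdec]
      refine (abs_sub _ _).trans (add_le_add ((abs_add_le _ _).trans ?_) (hI3 k))
      exact add_le_add (hI1 k) (hI2 k)

/-- Convergence of the currents `T_k`: for levels `λ_k`, bad sets `D_k` with weak-* limit
density `ζ`, and every smooth compactly supported test function `φ` on `B_l × ℝ²`,
the integrals over `B_l \ D_k` of `φ(x, u_k(x))` (resp. of `φ(x, u_k(x)) ∂_i (u_k)_j(x)`)
converge to the corresponding integrals against `u` weighted by `1 − ζ`. -/
theorem currents_Tk_converge (l : ℝ) (hl : 0 < l)
    (u : ℕ → V2 → V2) (K : ℕ → ℝ≥0)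
    (hLip : ∀ k, LipschitzOnWith (K k) (u k) (ball (0 : V2) l))
    (hval : ∀ k, ∀ x ∈ ball (0 : V2) l, ‖u k x‖ ≤ 1)
    (hgrad : (⨆ k, ∫⁻ x in ball (0 : V2) l,
        ENNReal.ofReal (Real.sqrt (frobSq (fderiv ℝ (u k) x)))) < ⊤)
    (lam : ℕ → ℝ) (hanti : StrictAnti lam) (hmem : ∀ k, lam k ∈ Set.Ioo (0 : ℝ) 2)
    (hlam0 : Tendsto lam atTop (𝓝 0))
    (hH : ∀ k, μH[1] {x : V2 | x ∈ ball (0 : V2) l \ {0} ∧ ‖u k x - vortex x‖ = lam k} < ⊤)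
    (hHlim : Tendsto (fun k => ENNReal.ofReal (lam k) *
        μH[1] {x : V2 | x ∈ ball (0 : V2) l \ {0} ∧ ‖u k x - vortex x‖ = lam k})
      atTop (𝓝 0))
    (D : ℕ → Set V2)
    (hD : ∀ k, D k = {x : V2 | x ∈ ball (0 : V2) l \ {0} ∧ lam k < ‖u k x - vortex x‖})
    (ζ : V2 → ℝ) (hζmeas : Measurable ζ) (hζmem : ∀ x, ζ x ∈ Set.Icc (0 : ℝ) 1)
    (hconv : ∀ g : V2 → ℝ, Integrable g (volume.restrict (ball (0 : V2) l)) →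
      Tendsto (fun k => ∫ x in D k, g x) atTop (𝓝 (∫ x in ball (0 : V2) l, ζ x * g x))) :
    ∀ φ : V2 × V2 → ℝ, ContDiff ℝ (⊤ : ℕ∞) φ → HasCompactSupport φ →
      tsupport φ ⊆ ball (0 : V2) l ×ˢ (Set.univ : Set V2) →
      (Tendsto (fun k => ∫ x in ball (0 : V2) l \ D k, φ (x, u k x)) atTop
        (𝓝 (∫ x in ball (0 : V2) l, φ (x, vortex x) * (1 - ζ x)))) ∧
      (∀ i j : Fin 2,
        Tendsto (fun k => ∫ x in ball (0 : V2) l \ D k,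
            φ (x, u k x) * fderiv ℝ (u k) x (EuclideanSpace.single i 1) j) atTop
          (𝓝 (∫ x in ball (0 : V2) l,
            φ (x, vortex x) * fderiv ℝ vortex x (EuclideanSpace.single i 1) j
              * (1 - ζ x)))) := by
  choose v hvL hvE using fun k => (hLip k).extend_finite_dimension
  have hfd : ∀ k, ∀ x ∈ ball (0 : V2) l, fderiv ℝ (u k) x = fderiv ℝ (v k) x := fun k x hx =>
    ((hvE k).eventuallyEq_of_mem (isOpen_ball.mem_nhds hx)).fderiv_eq
  have hHs : ∀ k, {x : V2 | x ∈ ball (0 : V2) l \ {0} ∧ ‖u k x - vortex x‖ = lam k} =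
      {x : V2 | x ∈ ball (0 : V2) l \ {0} ∧ ‖v k x - vortex x‖ = lam k} := by
    intro k
    ext x
    refine and_congr_right fun hx => ?_
    rw [hvE k hx.1]
  have hDs : ∀ k, D k = {x : V2 | x ∈ ball (0 : V2) l \ {0} ∧ lam k < ‖v k x - vortex x‖} := by
    intro k
    rw [hD k]
    ext x
    refine and_congr_right fun hx => ?_
    rw [hvE k hx.1]
  have hDm : ∀ k, MeasurableSet (ball (0 : V2) l \ D k) := fun k => by
    rw [hDs k]
    exact measurableSet_ball.diff ((measurableSet_ball.diff (measurableSet_singleton 0)).inter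
      (measurableSet_lt measurable_const
        ((hvL k).continuous.measurable.sub vortex_measurable).norm))
  have hg : ∀ k, ∫⁻ x in ball (0 : V2) l, ENNReal.ofReal (Real.sqrt (frobSq (fderiv ℝ (u k) x))) =
      ∫⁻ x in ball (0 : V2) l, ENNReal.ofReal (Real.sqrt (frobSq (fderiv ℝ (v k) x))) := fun k =>
    setLIntegral_congr_fun measurableSet_ball fun x hx => by simp only [hfd k x hx]
  simp only [hg] at hgrad
  simp only [hHs] at hH hHlim
  intro φ hφ hcs _
  obtain ⟨r1, r2⟩ := main_aux l hl v _ hvL hgrad lam hmem hlam0 hH hHlim D hDs ζ hζmeas hζmem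
    hconv φ hφ hcs
  constructor
  · refine r1.congr fun k => setIntegral_congr_fun (hDm k) fun x hx => ?_
    simp only [hvE k hx.1]
  · intro i j
    refine (r2 i j).congr fun k => setIntegral_congr_fun (hDm k) fun x hx => ?_
    simp only [hvE k hx.1, hfd k x hx.1]
end
end
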